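/- arXiv:2005.04354 — 2 statements merged into one kernel-verified Lean document; each statement's English description precedes it below -/
import Mathlib

section
/- Let θ ∈ (0, 1/2), let P = P_{T,θ} on {0,1}³ for the tree T with edge set {{1,2},{2,3}}, and let x_1,…,x_n be i.i.d. samples from P. The error probability of the maximum-weight spanning tree estimator with uniformly random tie-breaking equals Err_n := ℙ({Â_{1,3} > Â_{1,2}} ∪ {Â_{1,3} > Â_{2,3}}) + (1/2)·ℙ(Â_{2,3} > Â_{1,2} = Â_{1,3}) + (1/2)·ℙ(Â_{1,2} > Â_{2,3} = Â_{1,3}) + (2/3)·ℙ(Â_{1,2} = Â_{2,3} = Â_{1,3}), and it satisfies Err_n = (2f(n) − f̃(n))·(1 + o(n^{−1})); that is, n·( Err_n / (2f(n) − f̃(n)) − 1 ) → 0 as n → ∞. -/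
open scoped Classical BigOperators
open Filter

noncomputable section

/-- Symmetric pair weight `w(x i, x j)` lifted to unordered pairs. -/
def pairWeight (θ : ℝ) {p : ℕ} (x : Fin p → Bool) : Sym2 (Fin p) → ℝ :=
  Sym2.lift ⟨fun i j => if x i = x j then 1 - θ else θ, fun i j => by
    dsimp only
    by_cases h : x i = x j
    · rw [if_pos h, if_pos h.symm]
    · rw [if_neg h, if_neg (fun hh => h hh.symm)]⟩

/-- The homogeneous zero-external-field Ising tree distribution. -/
def isingP (θ : ℝ) {p : ℕ} (T : SimpleGraph (Fin p)) (x : Fin p → Bool) : ℝ :=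
  (1 / 2) * ∏ e ∈ T.edgeFinset, pairWeight θ x e

/-- Probability of an event `A` about `n` i.i.d. samples from pmf `P`. -/
def iidProb {p : ℕ} (P : (Fin p → Bool) → ℝ) (n : ℕ)
    (A : Set (Fin n → Fin p → Bool)) : ℝ :=
  ∑ xs : Fin n → Fin p → Bool, if xs ∈ A then ∏ k, P (xs k) else 0

/-- Empirical agreement weight. -/
def Ahat {p n : ℕ} (xs : Fin n → Fin p → Bool) (i j : Fin p) : ℝ :=
  ((Finset.univ.filter (fun k : Fin n => xs k i = xs k j)).card : ℝ) / n

/-- Empirical agreement weight on unordered pairs. -/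
def AhatSym {p n : ℕ} (xs : Fin n → Fin p → Bool) : Sym2 (Fin p) → ℝ :=
  Sym2.lift ⟨fun i j => Ahat xs i j, fun i j => by
    have h : (Finset.univ.filter fun k : Fin n => xs k i = xs k j)
        = (Finset.univ.filter fun k : Fin n => xs k j = xs k i) :=
      Finset.filter_congr (fun k _ => ⟨Eq.symm, Eq.symm⟩)
    simp only [Ahat, h]⟩

/-- The path (Markov chain) tree on 3 nodes with edges {1,2},{2,3}. -/
def chainA : SimpleGraph (Fin 3) := SimpleGraph.fromEdgeSet {s(0,1), s(1,2)}

def chainB : SimpleGraph (Fin 3) := SimpleGraph.fromEdgeSet {s(0,2), s(1,2)}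

def chainC : SimpleGraph (Fin 3) := SimpleGraph.fromEdgeSet {s(0,1), s(0,2)}

def path4 : SimpleGraph (Fin 4) := SimpleGraph.fromEdgeSet {s(0,1), s(1,2), s(2,3)}

def Kexp (θ : ℝ) : ℝ := -Real.log (1 - θ * (1 - Real.sqrt (4 * θ * (1 - θ))))

def sigmaSq (θ : ℝ) : ℝ := θ * Real.sqrt (4 * θ * (1 - θ)) * Real.exp (Kexp θ)

def zTheta (θ : ℝ) : ℝ := Real.sqrt (θ / (1 - θ))

def ftilde (θ : ℝ) (n : ℕ) : ℝ :=
  Real.exp (-(n : ℝ) * Kexp θ) / Real.sqrt (2 * Real.pi * sigmaSq θ * n)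
    * (1 + (1 - 3 * sigmaSq θ) / (8 * sigmaSq θ * n))

def fn (θ : ℝ) (n : ℕ) : ℝ :=
  ftilde θ n / (1 - zTheta θ)
    * (1 - zTheta θ * (1 + zTheta θ) / (2 * (1 - zTheta θ) ^ 2 * sigmaSq θ * n))

/-- Hamming distance. -/
def hamming {p : ℕ} (x y : Fin p → Bool) : ℕ :=
  (Finset.univ.filter (fun i => x i ≠ y i)).card

/-- Noisy (BSC with crossover probability q) version of a distribution. -/
def noisy (q : ℝ) {p : ℕ} (P : (Fin p → Bool) → ℝ) (y : Fin p → Bool) : ℝ :=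
  ∑ x : Fin p → Bool, q ^ hamming x y * (1 - q) ^ (p - hamming x y) * P x

def beta1 (θ q : ℝ) : ℝ :=
  ((1 - q) ^ 3 + q ^ 3) * (θ * (1 - θ) / 2) + q * (1 - q) * ((1 - θ * (1 - θ)) / 2)

def beta2 (θ q : ℝ) : ℝ :=
  ((1 - q) ^ 3 + q ^ 3) * (θ ^ 2 / 2) + q * (1 - q) * ((1 - θ ^ 2) / 2)

def Kq (θ q : ℝ) : ℝ :=
  -Real.log (1 - 4 * ((beta1 θ q + beta2 θ q) / 2 - Real.sqrt (beta1 θ q * beta2 θ q)))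

def mu2 (θ q : ℝ) : ℝ := 4 * Real.sqrt (beta1 θ q * beta2 θ q) * Real.exp (Kq θ q)

def zq (θ q : ℝ) : ℝ := Real.sqrt (beta2 θ q / beta1 θ q)

def ftildeq (θ q : ℝ) (n : ℕ) : ℝ :=
  Real.exp (-(n : ℝ) * Kq θ q) / Real.sqrt (2 * Real.pi * mu2 θ q * n)
    * (1 + (1 - 3 * mu2 θ q) / (8 * mu2 θ q * n))

def fnq (θ q : ℝ) (n : ℕ) : ℝ :=
  ftildeq θ q n / (1 - zq θ q)
    * (1 - zq θ q * (1 + zq θ q) / (2 * (1 - zq θ q) ^ 2 * mu2 θ q * n))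

/-- Marginal of a pmf on `{0,1}^p` on a single coordinate. -/
def marg1 {p : ℕ} (Q : (Fin p → Bool) → ℝ) (i : Fin p) (a : Bool) : ℝ :=
  ∑ x ∈ Finset.univ.filter (fun x : Fin p → Bool => x i = a), Q x

/-- Marginal of a pmf on `{0,1}^p` on a pair of coordinates. -/
def marg2 {p : ℕ} (Q : (Fin p → Bool) → ℝ) (i j : Fin p) (a b : Bool) : ℝ :=
  ∑ x ∈ Finset.univ.filter (fun x : Fin p → Bool => x i = a ∧ x j = b), Q x

/-- Kullback-Leibler divergence between pmfs on a finite type. -/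
def klDiv {X : Type*} [Fintype X] (Q P : X → ℝ) : ℝ :=
  ∑ x : X, Q x * Real.log (Q x / P x)

/-- Empirical mutual information between coordinates `i` and `j`. -/
def mutInf {p : ℕ} (Q : (Fin p → Bool) → ℝ) (i j : Fin p) : ℝ :=
  ∑ a : Bool, ∑ b : Bool,
    marg2 Q i j a b * Real.log (marg2 Q i j a b / (marg1 Q i a * marg1 Q j b))

end

/-- The error probability of the MWST estimator with uniformly random tie-breaking
for the 3-node chain, from `n` noiseless samples. -/
noncomputable def ErrProb (θ : ℝ) (n : ℕ) : ℝ :=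
  iidProb (isingP θ chainA) n
      {xs | Ahat xs 0 1 < Ahat xs 0 2 ∨ Ahat xs 1 2 < Ahat xs 0 2}
    + (1 / 2) * iidProb (isingP θ chainA) n
      {xs | Ahat xs 0 1 < Ahat xs 1 2 ∧ Ahat xs 0 1 = Ahat xs 0 2}
    + (1 / 2) * iidProb (isingP θ chainA) n
      {xs | Ahat xs 1 2 < Ahat xs 0 1 ∧ Ahat xs 1 2 = Ahat xs 0 2}
    + (2 / 3) * iidProb (isingP θ chainA) n
      {xs | Ahat xs 0 1 = Ahat xs 1 2 ∧ Ahat xs 1 2 = Ahat xs 0 2}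

open Topology MeasureTheory

lemma gauss_mom (b : ℝ) (hb : 0 < b) (k : ℕ) :
    IntegrableOn (fun x : ℝ => x ^ k * Real.exp (-b * x ^ 2)) (Set.Ioi 0) := by
  have := integrableOn_rpow_mul_exp_neg_mul_sq hb (s := (k:ℝ)) (by have : (0:ℝ) ≤ k := k.cast_nonneg; linarith)
  simpa using this

lemma gauss_int (b : ℝ) (hb : 0 < b) (k : ℕ) :
    ∫ x in Set.Ioi (0:ℝ), x ^ k * Real.exp (-b * x ^ 2) =
      b ^ (-((k:ℝ) + 1) / 2) * (1 / 2) * Real.Gamma (((k:ℝ) + 1) / 2) := by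
  have := integral_rpow_mul_exp_neg_mul_rpow (p := 2) (q := (k:ℝ)) (b := b) (by norm_num)
    (by have : (0:ℝ) ≤ k := k.cast_nonneg; linarith) hb
  simpa using this

lemma gauss_int2 (b : ℝ) (hb : 0 < b) :
    ∫ x in Set.Ioi (0:ℝ), x ^ 2 * Real.exp (-b * x ^ 2) = (Real.sqrt (Real.pi / b) / 2) / (2 * b) := by
  rw [gauss_int b hb 2]
  have h1 : (((2:ℕ):ℝ) + 1) / 2 = 1 / 2 + 1 := by norm_num
  have h2 : (-(((2:ℕ):ℝ) + 1) / 2) = -(1 / 2) - 1 := by norm_num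
  rw [h1, h2, Real.Gamma_add_one (by norm_num), Real.Gamma_one_half_eq, Real.rpow_sub hb,
    Real.rpow_neg hb.le, ← Real.sqrt_eq_rpow, Real.sqrt_div Real.pi_pos.le, Real.rpow_one]
  field_simp

lemma gauss_int4 (b : ℝ) (hb : 0 < b) :
    ∫ x in Set.Ioi (0:ℝ), x ^ 4 * Real.exp (-b * x ^ 2) = (Real.sqrt (Real.pi / b) / 2) * 3 / (4 * b ^ 2) := by
  rw [gauss_int b hb 4]
  have h1 : (((4:ℕ):ℝ) + 1) / 2 = 1 / 2 + 1 + 1 := by norm_num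
  have h2 : (-(((4:ℕ):ℝ) + 1) / 2) = -(1 / 2) - 1 - 1 := by norm_num
  rw [h1, h2, Real.Gamma_add_one (by norm_num), Real.Gamma_add_one (by norm_num), Real.Gamma_one_half_eq, Real.rpow_sub hb,
    Real.rpow_sub hb,
    Real.rpow_neg hb.le, ← Real.sqrt_eq_rpow, Real.sqrt_div Real.pi_pos.le, Real.rpow_one]
  field_simp
  norm_num

lemma cos_four {u : ℝ} (hu : |u| ≤ 1) :
    |1 - Real.cos u - (u ^ 2 / 2 - u ^ 4 / 24)| ≤ |u| ^ 6 := by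
  have h := Real.sin_bound (x := u / 2) (by rw [abs_div]; norm_num; linarith [abs_nonneg u])
  have hc : Real.cos u = 1 - 2 * Real.sin (u / 2) ^ 2 := by
    have := Real.cos_sq' (u / 2)
    have h2 := Real.cos_two_mul (u / 2)
    rw [show 2 * (u / 2) = u by ring] at h2
    rw [h2, this]; ring
  set e := Real.sin (u / 2) - (u / 2 - (u / 2) ^ 3 / 6) with he
  have hs : Real.sin (u / 2) = e + (u / 2 - (u / 2) ^ 3 / 6) := by rw [he]; ring
  rw [hc, hs]
  have e1 : 1 - (1 - 2 * (e + (u / 2 - (u / 2) ^ 3 / 6)) ^ 2) - (u ^ 2 / 2 - u ^ 4 / 24)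
     = 2 * e ^ 2 + 4 * e * (u / 2) + (- 4 * e * (u/2)^3 / 6) +  u ^ 6 / 64 / 18 := by ring
  rw [e1]
  have he' : |e| ≤ |u| ^ 5 / 3200 := by
    refine h.trans (le_of_eq ?_); rw [abs_div]; norm_num; ring
  have h6 : |u| ^ 6 ≤ 1 := pow_le_one₀ (abs_nonneg u) hu
  have h0 := abs_nonneg u
  have a1 : |2 * e ^ 2| ≤ |u| ^ 6 / 100 := by
    rw [abs_mul, abs_pow, abs_two]
    have : |e| ^ 2 ≤ (|u| ^ 5 / 3200) ^ 2 := by gcongr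
    have h4 : |u| ^ 4 ≤ 1 := pow_le_one₀ h0 hu
    nlinarith [pow_nonneg h0 6, mul_le_mul_of_nonneg_left h4 (pow_nonneg h0 6)]
  have a2 : |4 * e * (u / 2)| ≤ |u| ^ 6 / 100 := by
    rw [abs_mul, abs_mul, abs_div, abs_two]; norm_num
    nlinarith [mul_le_mul_of_nonneg_right he' h0, pow_nonneg h0 6]
  have a3 : |- 4 * e * (u / 2) ^ 3 / 6| ≤ |u| ^ 6 / 100 := by
    have : |- 4 * e * (u / 2) ^ 3 / 6| = |e| * |u| ^ 3 / 12 := by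
      rw [abs_div, abs_mul, abs_mul, abs_pow, abs_div]; norm_num; ring
    rw [this]
    have h4 : |u| ^ 2 ≤ 1 := pow_le_one₀ h0 hu
    nlinarith [mul_le_mul_of_nonneg_right he' (pow_nonneg h0 3), mul_le_mul_of_nonneg_left h4 (pow_nonneg h0 6), pow_nonneg h0 6]
  have a4 : |u ^ 6 / 64 / 18| ≤ |u| ^ 6 / 100 := by
    rw [abs_div, abs_div, abs_pow]; norm_num; linarith [pow_nonneg h0 6]
  have := abs_add_le (2 * e ^ 2 + 4 * e * (u / 2) + (- 4 * e * (u/2)^3 / 6)) (u ^ 6 / 64 / 18)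
  have := abs_add_le (2 * e ^ 2 + 4 * e * (u / 2)) (- 4 * e * (u/2)^3 / 6)
  have := abs_add_le (2 * e ^ 2) (4 * e * (u / 2))
  linarith [pow_nonneg h0 6]

lemma log_four (s : ℝ) (hs : 0 < s) (hs1 : s < 1) {u : ℝ} (hu : |u| ≤ 1) :
    |Real.log (1 - s * (1 - Real.cos u)) + s / 2 * u ^ 2 - (s / 24 - s ^ 2 / 8) * u ^ 4| ≤ 10 * |u| ^ 6 := by
  have h := cos_four hu
  have h0 := abs_nonneg u
  set w := 1 - Real.cos u with hw
  have hw0 : 0 ≤ w := by rw [hw]; linarith [Real.cos_le_one u]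
  have hw1 : w ≤ u ^ 2 / 2 := by rw [hw]; linarith [Real.one_sub_sq_div_two_le_cos (x := u)]
  have hu2 : u ^ 2 ≤ 1 := by rw [← sq_abs]; exact pow_le_one₀ h0 hu
  have hx : |s * w| ≤ u ^ 2 / 2 := by rw [abs_of_nonneg (by positivity)]; nlinarith
  have hx1 : |s * w| < 1 := by linarith
  have hl := Real.abs_log_sub_add_sum_range_le hx1 2
  simp only [Finset.sum_range_succ, Finset.sum_range_zero] at hl
  norm_num at hl
  have hl2 : |s * w + (s * w) ^ 2 / 2 + Real.log (1 - s * w)| ≤ |u| ^ 6 / 4 := by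
    refine hl.trans ?_
    rw [div_le_iff₀ (by simpa [abs_mul] using (by linarith : 0 < 1 - |s * w|))]
    rw [← abs_mul]
    have : |s * w| ^ 3 ≤ (u ^ 2 / 2) ^ 3 := by gcongr
    have h6 : |u| ^ 6 = (u ^ 2) ^ 3 := by rw [← sq_abs]; ring
    rw [← abs_mul, h6] at *
    nlinarith [pow_nonneg (sq_nonneg u) 3]
  set r := w - (u ^ 2 / 2 - u ^ 4 / 24) with hr
  have hwr : w + u ^ 2 / 2 ≤ u ^ 2 := by linarith
  have k1 : |w ^ 2 - u ^ 4 / 4| ≤ 2 * |u| ^ 6 := by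
    have : w ^ 2 - u ^ 4 / 4 = (w - u ^ 2 / 2) * (w + u ^ 2 / 2) := by ring
    rw [this, abs_mul]
    have b1 : |w - u ^ 2 / 2| ≤ 2 * |u| ^ 4 := by
      have : w - u ^ 2 / 2 = r - u ^ 4 / 24 := by rw [hr]; ring
      rw [this]
      have := abs_sub r (u ^ 4 / 24)
      have e : |u ^ 4 / 24| = |u| ^ 4 / 24 := by rw [abs_div, abs_pow]; norm_num
      have : |u| ^ 6 ≤ |u| ^ 4 := pow_le_pow_of_le_one h0 hu (by norm_num)
      linarith [pow_nonneg h0 4]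
    have b2 : |w + u ^ 2 / 2| ≤ |u| ^ 2 := by
      rw [abs_of_nonneg (by positivity), sq_abs]; exact hwr
    calc _ ≤ (2 * |u| ^ 4) * |u| ^ 2 := by gcongr
      _ = _ := by ring
  have e : Real.log (1 - s * w) + s / 2 * u ^ 2 - (s / 24 - s ^ 2 / 8) * u ^ 4 =
    (s * w + (s * w) ^ 2 / 2 + Real.log (1 - s * w)) - s * r - s ^ 2 / 2 * (w ^ 2 - u ^ 4 / 4) := by
    rw [hr]; ring
  rw [e]
  have t1 := abs_sub ((s * w + (s * w) ^ 2 / 2 + Real.log (1 - s * w)) - s * r) (s ^ 2 / 2 * (w ^ 2 - u ^ 4 / 4))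
  have t2 := abs_sub (s * w + (s * w) ^ 2 / 2 + Real.log (1 - s * w)) (s * r)
  have t3 : |s * r| ≤ |u| ^ 6 := by
    rw [abs_mul, abs_of_pos hs]; nlinarith [abs_nonneg r]
  have t4 : |s ^ 2 / 2 * (w ^ 2 - u ^ 4 / 4)| ≤ |u| ^ 6 := by
    rw [abs_mul, abs_of_nonneg (by positivity : 0 ≤ s ^ 2 / 2)]
    have : s ^ 2 ≤ 1 := by nlinarith
    nlinarith [abs_nonneg (w ^ 2 - u ^ 4 / 4)]
  linarith [pow_nonneg h0 6]

lemma phi_abs_le (s : ℝ) (hs : 0 < s) (hs1 : s < 1) :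
    ∃ c : ℝ, 0 < c ∧ c ≤ s / 2 ∧ ∀ u : ℝ, |u| ≤ Real.pi →
      |1 - s * (1 - Real.cos u)| ≤ Real.exp (-c * u ^ 2) := by
  set c' := min s (1 - s) with hc'
  have h1 : 0 < c' := lt_min hs (by linarith)
  have h2 : c' ≤ s := min_le_left _ _
  have h3 : c' ≤ 1 - s := min_le_right _ _
  have hpi : 4 ≤ Real.pi ^ 2 := by nlinarith [Real.pi_gt_three]
  refine ⟨c' * (2 / Real.pi ^ 2), by positivity, ?_, ?_⟩
  · have : 2 / Real.pi ^ 2 ≤ 1 / 2 := by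
      rw [div_le_div_iff₀ (by positivity) (by norm_num)]; linarith
    nlinarith
  · intro u hu
    have hq := Real.cos_le_one_sub_mul_cos_sq hu
    have hm := Real.neg_one_le_cos u
    have hM := Real.cos_le_one u
    have h4 : |1 - s * (1 - Real.cos u)| ≤ 1 - c' * (1 - Real.cos u) := by
      rw [abs_le]; constructor <;> nlinarith
    have h5 := Real.add_one_le_exp (-(c' * (2 / Real.pi ^ 2)) * u ^ 2)
    nlinarith

lemma phi_sub_le (s : ℝ) (hs : 0 < s) (hs1 : s < 1) (u : ℝ) :
    |(1 - s * (1 - Real.cos u)) - Real.exp (-(s / 2) * u ^ 2)| ≤ 2 * u ^ 4 := by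
  have hm := Real.neg_one_le_cos u
  have hM := Real.cos_le_one u
  by_cases hu : |u| ≤ 1
  · have h1 := Real.cos_bound hu
    have hu2 : u ^ 2 ≤ 1 := by rw [← sq_abs]; exact pow_le_one₀ (abs_nonneg u) hu
    have h2 := Real.abs_exp_sub_one_sub_id_le (x := -(s / 2) * u ^ 2) (by
      rw [abs_mul, abs_neg, abs_of_pos (by linarith), abs_of_nonneg (sq_nonneg u)]; nlinarith [sq_nonneg u])
    have h4 : |u| ^ 4 = u ^ 4 := by rw [← abs_pow]; exact abs_of_nonneg (by positivity)
    rw [h4] at h1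
    have e : (1 - s * (1 - Real.cos u)) - Real.exp (-(s / 2) * u ^ 2) =
      s * (Real.cos u - (1 - u ^ 2 / 2)) - (Real.exp (-(s / 2) * u ^ 2) - 1 - -(s / 2) * u ^ 2) := by ring
    rw [e]
    have t := abs_sub (s * (Real.cos u - (1 - u ^ 2 / 2))) (Real.exp (-(s / 2) * u ^ 2) - 1 - -(s / 2) * u ^ 2)
    have t2 : |s * (Real.cos u - (1 - u ^ 2 / 2))| ≤ u ^ 4 := by
      rw [abs_mul, abs_of_pos hs]
      nlinarith [abs_nonneg (Real.cos u - (1 - u ^ 2 / 2))]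
    have t3 : (-(s / 2) * u ^ 2) ^ 2 ≤ u ^ 4 := by
      have : (-(s / 2) * u ^ 2) ^ 2 = s ^ 2 / 4 * u ^ 4 := by ring
      rw [this]
      have : s ^ 2 ≤ 1 := by nlinarith
      have : 0 ≤ u ^ 4 := by positivity
      nlinarith
    linarith
  · push Not at hu
    have h4 : 1 ≤ u ^ 4 := by
      have : 1 ≤ |u| ^ 4 := one_le_pow₀ hu.le
      rwa [← abs_pow, abs_of_nonneg (by positivity)] at this
    have a1 : |1 - s * (1 - Real.cos u)| ≤ 1 := by rw [abs_le]; constructor <;> nlinarith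
    have a2 : |Real.exp (-(s / 2) * u ^ 2)| ≤ 1 := by
      rw [abs_of_pos (Real.exp_pos _), Real.exp_le_one_iff]
      nlinarith [sq_nonneg u]
    have := abs_sub (1 - s * (1 - Real.cos u)) (Real.exp (-(s / 2) * u ^ 2))
    linarith

lemma tendsto_n_exp {r : ℕ → ℝ} {l : ℝ} (h : Tendsto (fun n : ℕ => (n:ℝ) * r n) atTop (𝓝 l)) :
    Tendsto (fun n : ℕ => (n:ℝ) * (Real.exp (r n) - 1)) atTop (𝓝 l) := by
  have hinv : Tendsto (fun n : ℕ => ((n:ℝ))⁻¹) atTop (𝓝 0) := tendsto_inv_atTop_nhds_zero_nat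
  have hr : Tendsto r atTop (𝓝 0) := by
    have := h.mul hinv
    rw [mul_zero] at this
    refine this.congr' ?_
    filter_upwards [eventually_gt_atTop 0] with n hn
    have : (n:ℝ) ≠ 0 := by positivity
    field_simp
  have h2 : Tendsto (fun n : ℕ => |(n:ℝ) * r n| * |r n|) atTop (𝓝 0) := by
    have := h.abs.mul hr.abs
    simpa using this
  have h3 : Tendsto (fun n : ℕ => (n:ℝ) * (Real.exp (r n) - 1 - r n)) atTop (𝓝 0) := by
    refine squeeze_zero_norm' ?_ h2
    have : ∀ᶠ n in atTop, |r n| < 1 := by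
      have := hr.abs
      rw [abs_zero] at this
      exact this.eventually_lt_const one_pos
    filter_upwards [this] with n hn
    rw [Real.norm_eq_abs, abs_mul, abs_mul, mul_assoc]
    gcongr
    have := Real.abs_exp_sub_one_sub_id_le hn.le
    rwa [← sq_abs, sq] at this
  have := h3.add h
  rw [zero_add] at this
  refine this.congr (fun n => by ring)

lemma scale_tendsto (x : ℝ) (g : ℝ → ℝ) (C : ℝ) (k : ℕ) (hk : 1 ≤ k) (hg : ∀ u, |u| ≤ 1 → |g u| ≤ C * |u| ^ (2 * (k + 1))) :
    Tendsto (fun n : ℕ => (n:ℝ) ^ k * g (x / Real.sqrt n)) atTop (𝓝 0) := by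
  have hinv : Tendsto (fun n : ℕ => C * |x| ^ (2 * (k + 1)) * ((n:ℝ))⁻¹) atTop (𝓝 0) := by
    have := (tendsto_inv_atTop_nhds_zero_nat (𝕜 := ℝ)).const_mul (C * |x| ^ (2 * (k + 1)))
    simpa using this
  refine squeeze_zero_norm' ?_ hinv
  obtain ⟨N, hN⟩ := exists_nat_ge (x ^ 2)
  filter_upwards [eventually_ge_atTop N, eventually_gt_atTop 0] with n hn hn0
  have hn' : (0:ℝ) < n := by exact_mod_cast hn0
  have hs : 0 < Real.sqrt n := Real.sqrt_pos.mpr hn'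
  have hu : |x / Real.sqrt n| ≤ 1 := by
    rw [abs_div, abs_of_pos hs, div_le_one hs]
    apply Real.abs_le_sqrt
    have : (N:ℝ) ≤ n := by exact_mod_cast hn
    linarith
  rw [Real.norm_eq_abs, abs_mul, abs_of_nonneg (by positivity : (0:ℝ) ≤ (n:ℝ) ^ k)]
  have e : |x / Real.sqrt n| ^ (2 * (k + 1)) = |x| ^ (2 * (k + 1)) / (n:ℝ) ^ (k + 1) := by
    rw [abs_div, abs_of_pos hs, div_pow, pow_mul (Real.sqrt n), Real.sq_sqrt hn'.le]
  have := hg _ hu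
  rw [e] at this
  calc _ ≤ (n:ℝ) ^ k * (C * (|x| ^ (2 * (k + 1)) / (n:ℝ) ^ (k + 1))) := by gcongr
    _ = _ := by field_simp; ring

lemma pow_pointwise (s : ℝ) (hs : 0 < s) (hs1 : s < 1) (x : ℝ) :
    Tendsto (fun n : ℕ => (n:ℝ) * ((1 - s * (1 - Real.cos (x / Real.sqrt n))) ^ n
      - Real.exp (-(s / 2) * x ^ 2))) atTop
      (𝓝 ((s / 24 - s ^ 2 / 8) * x ^ 4 * Real.exp (-(s / 2) * x ^ 2))) := by
  have h := scale_tendsto x (fun u => Real.log (1 - s * (1 - Real.cos u)) + s / 2 * u ^ 2 - (s / 24 - s ^ 2 / 8) * u ^ 4) 10 2 (by norm_num)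
    (fun u hu => by simpa using log_four s hs hs1 hu)
  have h2 : Tendsto (fun n : ℕ => (n:ℝ) * ((n:ℝ) * Real.log (1 - s * (1 - Real.cos (x / Real.sqrt n))) + s / 2 * x ^ 2)) atTop (𝓝 ((s / 24 - s ^ 2 / 8) * x ^ 4)) := by
    have := h.add_const ((s / 24 - s ^ 2 / 8) * x ^ 4)
    rw [zero_add] at this
    refine this.congr' ?_
    filter_upwards [eventually_gt_atTop 0] with n hn0
    have hn' : (0:ℝ) < n := by exact_mod_cast hn0
    have e2 : (x / Real.sqrt n) ^ 2 = x ^ 2 / n := by rw [div_pow, Real.sq_sqrt hn'.le]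
    have e4 : (x / Real.sqrt n) ^ 4 = x ^ 4 / n ^ 2 := by
      rw [show (x / Real.sqrt n) ^ 4 = ((x / Real.sqrt n) ^ 2) ^ 2 by ring, e2]; ring
    simp only [e2, e4]
    field_simp
    ring
  have h3 := (tendsto_n_exp h2).mul_const (Real.exp (-(s / 2) * x ^ 2))
  refine h3.congr' ?_
  have hc : Tendsto (fun n : ℕ => 1 - s * (1 - Real.cos (x / Real.sqrt n))) atTop (𝓝 1) := by
    have h1 : Tendsto (fun n : ℕ => x / Real.sqrt n) atTop (𝓝 0) :=
      Tendsto.const_div_atTop (Real.tendsto_sqrt_atTop.comp tendsto_natCast_atTop_atTop) x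
    have := (Real.continuous_cos.tendsto 0).comp h1
    rw [Real.cos_zero] at this
    have := ((this.const_sub 1).const_mul s).const_sub 1
    simpa using this
  filter_upwards [hc.eventually_const_lt one_pos] with n hn
  rw [mul_assoc, sub_mul, ← Real.exp_add]
  have : (n:ℝ) * Real.log (1 - s * (1 - Real.cos (x / Real.sqrt n))) + s / 2 * x ^ 2 + -(s / 2) * x ^ 2 = (n:ℝ) * Real.log (1 - s * (1 - Real.cos (x / Real.sqrt n))) := by ring
  rw [this, Real.exp_nat_mul, Real.exp_log hn, one_mul]

lemma laplace (s : ℝ) (hs : 0 < s) (hs1 : s < 1) (h : ℝ → ℝ) (hcont : Continuous h) (h0 h2 C : ℝ)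
    (hH : ∀ u, |h u| ≤ C) (hC : ∀ u, |h u - h0| ≤ C * u ^ 2)
    (h4 : ∀ u, |u| ≤ 1 → |h u - h0 - h2 * u ^ 2| ≤ C * u ^ 4) :
    Tendsto (fun n : ℕ => (n:ℝ) * (Real.sqrt n * (∫ u in (0:ℝ)..Real.pi, (1 - s * (1 - Real.cos u)) ^ n * h u)
      - h0 * (Real.sqrt (Real.pi / (s / 2)) / 2))) atTop
      (𝓝 ((Real.sqrt (Real.pi / (s / 2)) / 2) * (h0 * (s / 24 - s ^ 2 / 8) * 3 / s ^ 2 + h2 / s))) := by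
  have hh0 : h 0 = h0 := by
    have := hC 0
    simp at this
    linarith
  have hC0 : 0 ≤ C := (abs_nonneg _).trans (hH 0)
  have hh0' : |h0| ≤ C := hh0 ▸ hH 0
  set b := s / 2 with hb
  have hb0 : 0 < b := by positivity
  set F : ℕ → ℝ → ℝ := fun n => (Set.Ioc 0 (Real.pi * Real.sqrt n)).indicator
    (fun x => (1 - s * (1 - Real.cos (x / Real.sqrt n))) ^ n * h (x / Real.sqrt n)) with hF
  set G : ℕ → ℝ → ℝ := fun n x => (n:ℝ) * (F n x - h0 * Real.exp (-b * x ^ 2)) with hG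
  obtain ⟨c, hc0, hcb, hc⟩ := phi_abs_le s hs hs1
  have hFm : ∀ n : ℕ, Continuous (fun x : ℝ => (1 - s * (1 - Real.cos (x / Real.sqrt n))) ^ n * h (x / Real.sqrt n)) := by
    intro n; fun_prop
  have hFint : ∀ n, Integrable (F n) (volume.restrict (Set.Ioi 0)) := by
    intro n
    rw [hF]
    apply Integrable.restrict
    rw [integrable_indicator_iff measurableSet_Ioc]
    exact (hFm n).integrableOn_Ioc
  have hgi : Integrable (fun x : ℝ => h0 * Real.exp (-b * x ^ 2)) (volume.restrict (Set.Ioi 0)) := by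
    have := (gauss_mom b hb0 0)
    simp only [pow_zero, one_mul] at this
    exact Integrable.const_mul this h0
  have key : Tendsto (fun n : ℕ => ∫ x in Set.Ioi (0:ℝ), G n x) atTop
     (𝓝 (∫ x in Set.Ioi (0:ℝ), (h0 * (s / 24 - s ^ 2 / 8)) * (x ^ 4 * Real.exp (-b * x ^ 2)) + h2 * (x ^ 2 * Real.exp (-b * x ^ 2)))) := by
    refine tendsto_integral_filter_of_dominated_convergence
      (fun x => 2 * C * (x ^ 4 * Real.exp (-(c / 2) * x ^ 2)) + C * (x ^ 2 * Real.exp (-(c / 2) * x ^ 2))) ?_ ?_ ?_ ?_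
    · refine Eventually.of_forall fun n => ?_
      exact (((hFint n).sub hgi).const_mul _).aestronglyMeasurable
    · filter_upwards [eventually_ge_atTop 2] with n hn
      filter_upwards [self_mem_ae_restrict measurableSet_Ioi] with x hx
      have hx : 0 < x := hx
      have hn2 : (2:ℝ) ≤ n := by exact_mod_cast hn
      have hn' : (0:ℝ) < n := by linarith
      have hsq : 0 < Real.sqrt n := Real.sqrt_pos.mpr hn'
      have hexp : Real.exp (-b * x ^ 2) ≤ Real.exp (-(c / 2) * x ^ 2) := by
        rw [Real.exp_le_exp]; nlinarith [sq_nonneg x]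
      have e2 : (x / Real.sqrt n) ^ 2 = x ^ 2 / n := by rw [div_pow, Real.sq_sqrt hn'.le]
      have e4 : (x / Real.sqrt n) ^ 4 = x ^ 4 / n ^ 2 := by
        rw [show (x / Real.sqrt n) ^ 4 = ((x / Real.sqrt n) ^ 2) ^ 2 by ring, e2]; ring
      rw [Real.norm_eq_abs, hG]
      dsimp only
      rw [abs_mul, abs_of_pos hn']
      by_cases hxn : x ≤ Real.pi * Real.sqrt n
      · have hmem : x ∈ Set.Ioc 0 (Real.pi * Real.sqrt n) := ⟨hx, hxn⟩
        rw [hF]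
        simp only [Set.indicator_of_mem hmem]
        set u := x / Real.sqrt n with hu
        have hu0 : 0 < u := by positivity
        have hupi : |u| ≤ Real.pi := by
          rw [abs_of_pos hu0, hu, div_le_iff₀ hsq]; exact hxn
        set a := 1 - s * (1 - Real.cos u) with ha
        set d := Real.exp (-b * u ^ 2) with hd
        have hdn : Real.exp (-b * x ^ 2) = d ^ n := by
          rw [hd, ← Real.exp_nat_mul, e2]; congr 1; field_simp
        have p1 := abs_pow_sub_pow_le a d n
        have p2 : |a - d| ≤ 2 * u ^ 4 := phi_sub_le s hs hs1 u
        have p3 : max |a| |d| ≤ Real.exp (-c * u ^ 2) := by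
          refine max_le (hc u hupi) ?_
          rw [abs_of_pos (Real.exp_pos _), Real.exp_le_exp]; nlinarith [sq_nonneg u]
        have p4 : (max |a| |d|) ^ (n - 1) ≤ Real.exp (-(c / 2) * x ^ 2) := by
          calc _ ≤ (Real.exp (-c * u ^ 2)) ^ (n - 1) := by
                gcongr
            _ = Real.exp (((n - 1 : ℕ) : ℝ) * (-c * u ^ 2)) := by rw [Real.exp_nat_mul]
            _ ≤ _ := by
                rw [Real.exp_le_exp, Nat.cast_sub (by omega), e2]
                have : (1:ℝ) / 2 ≤ ((n:ℝ) - (1:ℕ)) / n := by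
                  rw [div_le_div_iff₀ (by norm_num) hn']; push_cast; linarith
                have h3 : ((n:ℝ) - (1:ℕ)) * (-c * (x ^ 2 / n)) = - (c * x ^ 2) * (((n:ℝ) - (1:ℕ)) / n) := by ring
                rw [h3]
                nlinarith [mul_nonneg hc0.le (sq_nonneg x)]
        have p5 : |a ^ n - d ^ n| ≤ 2 * (x ^ 4 / n ^ 2) * n * Real.exp (-(c / 2) * x ^ 2) := by
          refine p1.trans ?_
          rw [← e4]
          gcongr
        rw [hdn]
        have q : a ^ n * h u - h0 * d ^ n = (a ^ n - d ^ n) * h u + d ^ n * (h u - h0) := by ring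
        rw [q]
        have q1 := abs_add_le ((a ^ n - d ^ n) * h u) (d ^ n * (h u - h0))
        rw [abs_mul, abs_mul, abs_of_pos (by positivity : 0 < d ^ n)] at q1
        have q2 : |a ^ n - d ^ n| * |h u| ≤ (2 * (x ^ 4 / n ^ 2) * n * Real.exp (-(c / 2) * x ^ 2)) * C := by
          gcongr
          exact hH u
        have q3 : d ^ n * |h u - h0| ≤ Real.exp (-(c / 2) * x ^ 2) * (C * (x ^ 2 / n)) := by
          rw [← e2]
          rw [← hdn]
          gcongr
          exact hC u
        calc (n:ℝ) * |(a ^ n - d ^ n) * h u + d ^ n * (h u - h0)|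
            ≤ n * ((2 * (x ^ 4 / n ^ 2) * n * Real.exp (-(c / 2) * x ^ 2)) * C + Real.exp (-(c / 2) * x ^ 2) * (C * (x ^ 2 / n))) := by
              gcongr; linarith
          _ = _ := by field_simp
      · have hmem : x ∉ Set.Ioc 0 (Real.pi * Real.sqrt n) := fun hm => hxn hm.2
        rw [hF]
        simp only [Set.indicator_of_notMem hmem]
        push Not at hxn
        have hnx : (n:ℝ) ≤ x ^ 2 := by
          have : Real.sqrt n ≤ x := by nlinarith [Real.pi_gt_three]
          rw [← Real.sq_sqrt hn'.le]; gcongr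
        rw [zero_sub, abs_neg, abs_mul, abs_of_pos (Real.exp_pos _)]
        have : (n:ℝ) * (|h0| * Real.exp (-b * x ^ 2)) ≤ x ^ 2 * (C * Real.exp (-(c / 2) * x ^ 2)) := by
          gcongr
        have : 0 ≤ 2 * C * (x ^ 4 * Real.exp (-(c / 2) * x ^ 2)) := by positivity
        linarith
    · exact ((gauss_mom (c/2) (by positivity) 4).const_mul _).add ((gauss_mom (c/2) (by positivity) 2).const_mul _)
    · filter_upwards [self_mem_ae_restrict measurableSet_Ioi] with x hx
      have hx : 0 < x := hx
      have t1 := pow_pointwise s hs hs1 x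
      have hlim : Tendsto (fun n : ℕ => x / Real.sqrt n) atTop (𝓝 0) :=
        Tendsto.const_div_atTop (Real.tendsto_sqrt_atTop.comp tendsto_natCast_atTop_atTop) x
      have t2 : Tendsto (fun n : ℕ => h (x / Real.sqrt n)) atTop (𝓝 h0) := by
        have := (hcont.tendsto 0).comp hlim
        rwa [hh0] at this
      have t3 := scale_tendsto x (fun u => h u - h0 - h2 * u ^ 2) C 1 le_rfl (fun u hu => by
        have := h4 u hu
        have e : |u| ^ (2 * (1 + 1)) = u ^ 4 := by
          norm_num; rw [← abs_pow]; exact abs_of_nonneg (by positivity)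
        rw [e]; exact this)
      have t4 := (t1.mul t2).add ((t3.add_const (h2 * x ^ 2)).const_mul (Real.exp (-b * x ^ 2)))
      have e : (h0 * (s / 24 - s ^ 2 / 8)) * (x ^ 4 * Real.exp (-b * x ^ 2)) + h2 * (x ^ 2 * Real.exp (-b * x ^ 2)) =
        (s / 24 - s ^ 2 / 8) * x ^ 4 * Real.exp (-(s / 2) * x ^ 2) * h0 + Real.exp (-b * x ^ 2) * (0 + h2 * x ^ 2) := by
        rw [← hb]; ring
      rw [e]
      refine t4.congr' ?_
      obtain ⟨N, hN⟩ := exists_nat_ge (x ^ 2)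
      filter_upwards [eventually_ge_atTop N, eventually_gt_atTop 0] with n hn hn0
      have hn' : (0:ℝ) < n := by exact_mod_cast hn0
      have hmem : x ∈ Set.Ioc 0 (Real.pi * Real.sqrt n) := by
        refine ⟨hx, ?_⟩
        have : x ≤ Real.sqrt n := by
          apply Real.le_sqrt_of_sq_le
          have : (N:ℝ) ≤ n := by exact_mod_cast hn
          linarith
        nlinarith [Real.pi_gt_three, Real.sqrt_nonneg n]
      rw [hG, hF]
      simp only [Set.indicator_of_mem hmem]
      have e2 : (x / Real.sqrt n) ^ 2 = x ^ 2 / n := by rw [div_pow, Real.sq_sqrt hn'.le]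
      rw [e2, ← hb]
      field_simp
      ring
  have hval : (∫ x in Set.Ioi (0:ℝ), (h0 * (s / 24 - s ^ 2 / 8)) * (x ^ 4 * Real.exp (-b * x ^ 2)) + h2 * (x ^ 2 * Real.exp (-b * x ^ 2))) =
      (Real.sqrt (Real.pi / b) / 2) * (h0 * (s / 24 - s ^ 2 / 8) * 3 / s ^ 2 + h2 / s) := by
    rw [integral_add ((gauss_mom b hb0 4).const_mul _) ((gauss_mom b hb0 2).const_mul _),
      integral_const_mul, integral_const_mul, gauss_int2 b hb0, gauss_int4 b hb0, hb]
    field_simp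
    ring
  rw [← hval]
  refine key.congr' ?_
  filter_upwards [eventually_gt_atTop 0] with n hn0
  have hn' : (0:ℝ) < n := by exact_mod_cast hn0
  have hsq : 0 < Real.sqrt n := Real.sqrt_pos.mpr hn'
  rw [hG]
  dsimp only
  rw [integral_const_mul, integral_sub (hFint n) hgi, integral_const_mul, integral_gaussian_Ioi]
  congr 2
  rw [hF]
  dsimp only
  rw [setIntegral_indicator measurableSet_Ioc]
  have : Set.Ioi (0:ℝ) ∩ Set.Ioc 0 (Real.pi * Real.sqrt n) = Set.Ioc 0 (Real.pi * Real.sqrt n) :=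
    Set.inter_eq_right.mpr (fun x hx => hx.1)
  rw [this, ← intervalIntegral.integral_of_le (by positivity)]
  rw [intervalIntegral.integral_comp_div (fun u => (1 - s * (1 - Real.cos u)) ^ n * h u) hsq.ne']
  simp [hsq.ne']

noncomputable def pk (z u : ℝ) : ℝ := (1 - z ^ 2) / (1 - 2 * z * Real.cos u + z ^ 2)

lemma pk_den (z : ℝ) (hz0 : 0 < z) (hz1 : z < 1) (u : ℝ) : (1 - z) ^ 2 ≤ 1 - 2 * z * Real.cos u + z ^ 2 := by
  nlinarith [Real.cos_le_one u]

lemma pk_cont (z : ℝ) (hz0 : 0 < z) (hz1 : z < 1) : Continuous (pk z) := by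
  unfold pk
  refine Continuous.div (by fun_prop) (by fun_prop) (fun u => ?_)
  have := pk_den z hz0 hz1 u
  have : 0 < (1 - z) ^ 2 := by have : 0 < 1 - z := by linarith
                               positivity
  linarith

lemma poisson_nat (z : ℝ) (hz0 : 0 < z) (hz1 : z < 1) (m : ℕ) :
    ∫ u in (0:ℝ)..Real.pi, pk z u * Real.cos (m * u) = Real.pi * z ^ m := by
  have h := DiffContOnCl.circleAverage_poissonKernel_smul' (R := 1) (c := 0) (w := (z:ℂ)) (f := fun ζ : ℂ => ζ ^ m)
    ((differentiable_id.pow m).diffContOnCl) (by simp [abs_of_pos hz0, hz1])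
  rw [Real.circleAverage_def] at h
  have hre := congrArg Complex.re h
  have hI : ∀ u : ℝ, ((‖circleMap 0 1 u - 0‖ ^ 2 - ‖(z:ℂ) - 0‖ ^ 2) / ‖(circleMap 0 1 u - 0) - ((z:ℂ) - 0)‖ ^ 2) • (circleMap 0 1 u) ^ m
      = ((pk z u : ℝ) : ℂ) * Complex.exp (((m * u : ℝ) : ℂ) * Complex.I) := by
    intro u
    have e1 : circleMap 0 1 u = Complex.exp (u * Complex.I) := by simp [circleMap]
    have e2 : ‖circleMap 0 1 u - 0‖ ^ 2 = 1 := by simp [circleMap]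
    have e3 : ‖(z:ℂ) - 0‖ ^ 2 = z ^ 2 := by simp
    have e4 : ‖(circleMap 0 1 u - 0) - ((z:ℂ) - 0)‖ ^ 2 = 1 - 2 * z * Real.cos u + z ^ 2 := by
      rw [e1, ← Complex.normSq_eq_norm_sq, Complex.normSq_apply]
      simp [Complex.exp_ofReal_mul_I_re, Complex.exp_ofReal_mul_I_im]
      nlinarith [Real.sin_sq_add_cos_sq u]
    rw [e2, e3, e4, e1, ← Complex.exp_nat_mul, Complex.real_smul, pk]
    congr 2
    push_cast; ring
  simp_rw [hI] at hre
  have hcont : Continuous (fun u : ℝ => ((pk z u : ℝ) : ℂ) * Complex.exp (((m * u : ℝ) : ℂ) * Complex.I)) := by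
    have := pk_cont z hz0 hz1
    fun_prop
  have h2 : (∫ u in (0:ℝ)..2 * Real.pi, ((pk z u : ℝ) : ℂ) * Complex.exp (((m * u : ℝ) : ℂ) * Complex.I)).re
     = ∫ u in (0:ℝ)..2 * Real.pi, pk z u * Real.cos (m * u) := by
    have := Complex.reCLM.intervalIntegral_comp_comm (μ := volume) (hcont.intervalIntegrable 0 (2 * Real.pi))
    simp only [Complex.reCLM_apply] at this
    rw [← this]
    congr 1
    ext u
    rw [Complex.re_ofReal_mul, Complex.exp_ofReal_mul_I_re]
  rw [Complex.real_smul, Complex.re_ofReal_mul, h2] at hre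
  have hr : (((z:ℂ)) ^ m).re = z ^ m := by rw [← Complex.ofReal_pow, Complex.ofReal_re]
  simp only [hr] at hre
  have hc : Continuous (fun u => pk z u * Real.cos (m * u)) := by
    have := pk_cont z hz0 hz1
    fun_prop
  have hsplit := intervalIntegral.integral_add_adjacent_intervals (μ := volume) (hc.intervalIntegrable 0 Real.pi) (hc.intervalIntegrable Real.pi (2 * Real.pi))
  have hsym : ∫ u in Real.pi..2 * Real.pi, pk z u * Real.cos (m * u) = ∫ u in (0:ℝ)..Real.pi, pk z u * Real.cos (m * u) := by
    have := intervalIntegral.integral_comp_sub_left (a := 0) (b := Real.pi) (fun u => pk z u * Real.cos (m * u)) (2 * Real.pi)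
    rw [show 2 * Real.pi - Real.pi = Real.pi by ring, sub_zero] at this
    rw [← this]
    congr 1
    ext u
    have e1 : pk z (2 * Real.pi - u) = pk z u := by rw [pk, pk, Real.cos_two_pi_sub]
    have e2 : Real.cos (m * (2 * Real.pi - u)) = Real.cos (m * u) := by
      rw [mul_sub, Real.cos_nat_mul_two_pi_sub]
    rw [e1, e2]
  rw [hsym] at hsplit
  rw [← hsplit] at hre
  have := Real.pi_pos
  field_simp at hre
  linarith

lemma poisson_int (z : ℝ) (hz0 : 0 < z) (hz1 : z < 1) (m : ℤ) :
    ∫ u in (0:ℝ)..Real.pi, pk z u * Real.cos (m * u) = Real.pi * z ^ m.natAbs := by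
  rw [← poisson_nat z hz0 hz1]
  congr 1
  ext u
  congr 1
  rw [← Real.cos_abs, ← Real.cos_abs ((m.natAbs : ℝ) * u), abs_mul, abs_mul]
  congr 2
  rw [Nat.abs_cast, ← Int.cast_abs, Int.abs_eq_natAbs]; simp

lemma pk_bounds (z : ℝ) (hz0 : 0 < z) (hz1 : z < 1) : ∃ C : ℝ,
    (∀ u, |pk z u| ≤ C) ∧ (∀ u, |pk z u - (1 + z) / (1 - z)| ≤ C * u ^ 2) ∧
    (∀ u, |u| ≤ 1 → |pk z u - (1 + z) / (1 - z) - (-((1 + z) / (1 - z) * (z / (1 - z) ^ 2))) * u ^ 2| ≤ C * u ^ 4) := by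
  have hz : 0 < 1 - z := by linarith
  set A := (1 - z) ^ 2 with hA
  have hA0 : 0 < A := by positivity
  set h0 := (1 + z) / (1 - z) with hh0
  have hh : 0 < h0 := by positivity
  have hform : ∀ u, pk z u = h0 * A / (A + 2 * z * (1 - Real.cos u)) := by
    intro u
    rw [pk, hh0, hA]
    congr 1
    · field_simp; ring
    · ring
  have hw0 : ∀ u, 0 ≤ 1 - Real.cos u := fun u => by linarith [Real.cos_le_one u]
  have hw1 : ∀ u, 1 - Real.cos u ≤ u ^ 2 / 2 := fun u => by linarith [Real.one_sub_sq_div_two_le_cos (x := u)]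
  refine ⟨h0 + h0 * (z / A) + h0 * (z / A) ^ 2 + h0 * (z / A), ?_, ?_, ?_⟩
  · intro u
    have hw := hw0 u
    rw [hform, abs_of_nonneg (by positivity)]
    have : h0 * A / (A + 2 * z * (1 - Real.cos u)) ≤ h0 := by
      rw [div_le_iff₀ (by positivity)]
      nlinarith [mul_nonneg hh.le (mul_nonneg hz0.le hw)]
    have : 0 ≤ h0 * (z / A) := by positivity
    have : 0 ≤ h0 * (z / A) ^ 2 := by positivity
    linarith
  · intro u
    have hw := hw0 u
    have hw' := hw1 u
    have hfu := hform u
    set w := 1 - Real.cos u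
    have e : pk z u - h0 = - (h0 * (2 * z * w) / (A + 2 * z * w)) := by
      rw [hfu]; field_simp; ring
    rw [e, abs_neg, abs_of_nonneg (by positivity)]
    have : h0 * (2 * z * w) / (A + 2 * z * w) ≤ h0 * (z / A) * u ^ 2 := by
      calc _ ≤ h0 * (2 * z * w) / A := by gcongr; nlinarith [mul_nonneg hz0.le hw]
        _ ≤ h0 * (2 * z * (u ^ 2 / 2)) / A := by gcongr
        _ = _ := by ring
    have : 0 ≤ h0 * (z / A) * u ^ 2 := by positivity
    have : 0 ≤ h0 * (z / A) ^ 2 * u ^ 2 := by positivity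
    have : 0 ≤ h0 * u ^ 2 := by positivity
    linarith
  · intro u hu
    have hw := hw0 u
    have hw' := hw1 u
    have hfu := hform u
    have hcb := Real.cos_bound hu
    have h4 : |u| ^ 4 = u ^ 4 := by rw [← abs_pow]; exact abs_of_nonneg (by positivity)
    rw [h4] at hcb
    set w := 1 - Real.cos u with hwdef
    have hcb' : |u ^ 2 / 2 - w| ≤ u ^ 4 * (5 / 96) := by
      have : u ^ 2 / 2 - w = Real.cos u - (1 - u ^ 2 / 2) := by rw [hwdef]; ring
      rwa [this]
    have e : pk z u - h0 - (-(h0 * (z / A))) * u ^ 2 = h0 * (2 * z * w) ^ 2 / (A * (A + 2 * z * w)) + 2 * h0 * (z / A) * (u ^ 2 / 2 - w) := by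
      rw [hfu]; field_simp; ring
    rw [e]
    have t := abs_add_le (h0 * (2 * z * w) ^ 2 / (A * (A + 2 * z * w))) (2 * h0 * (z / A) * (u ^ 2 / 2 - w))
    rw [abs_of_nonneg (by positivity : 0 ≤ h0 * (2 * z * w) ^ 2 / (A * (A + 2 * z * w))), abs_mul, abs_of_nonneg (by positivity : 0 ≤ 2 * h0 * (z / A))] at t
    have t1 : h0 * (2 * z * w) ^ 2 / (A * (A + 2 * z * w)) ≤ h0 * (z / A) ^ 2 * u ^ 4 := by
      calc _ ≤ h0 * (2 * z * w) ^ 2 / (A * A) := by gcongr; nlinarith [mul_nonneg hz0.le hw]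
        _ ≤ h0 * (2 * z * (u ^ 2 / 2)) ^ 2 / (A * A) := by gcongr
        _ = _ := by ring
    have t2 : 2 * h0 * (z / A) * |u ^ 2 / 2 - w| ≤ 2 * h0 * (z / A) * (u ^ 4 * (5 / 96)) := by gcongr
    have : 0 ≤ h0 * (z / A) * u ^ 4 := by positivity
    have : 0 ≤ h0 * u ^ 4 := by positivity
    linarith

def dOne (x : Fin 3 → Bool) : ℤ := (if x 0 = x 2 then 1 else 0) - (if x 0 = x 1 then 1 else 0)
def dTwo (x : Fin 3 → Bool) : ℤ := (if x 0 = x 2 then 1 else 0) - (if x 1 = x 2 then 1 else 0)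

lemma ising_eq (θ : ℝ) (x : Fin 3 → Bool) : isingP θ chainA x =
    (1 / 2) * ((if x 0 = x 1 then 1 - θ else θ) * (if x 1 = x 2 then 1 - θ else θ)) := by
  have h : chainA.edgeFinset = {s(0,1), s(1,2)} := by
    ext e
    rw [SimpleGraph.mem_edgeFinset]
    simp only [chainA, SimpleGraph.edgeSet_fromEdgeSet, Set.mem_sdiff, Set.mem_insert_iff, Set.mem_singleton_iff, Finset.mem_insert, Finset.mem_singleton]
    constructor
    · exact fun h => h.1
    · intro h
      refine ⟨h, ?_⟩
      rcases h with rfl | rfl <;> simp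
  rw [isingP, h, Finset.prod_pair (by decide)]
  simp [pairWeight]

lemma sum_fin3 {R : Type*} [AddCommMonoid R] (F : (Fin 3 → Bool) → R) :
    ∑ x, F x = ∑ a : Bool, ∑ b : Bool, ∑ c : Bool, F ![a, b, c] := by
  let e : Bool × Bool × Bool ≃ (Fin 3 → Bool) :=
    { toFun := fun p => ![p.1, p.2.1, p.2.2]
      invFun := fun x => (x 0, x 1, x 2)
      left_inv := fun p => by simp
      right_inv := fun x => by ext i; fin_cases i <;> simp }
  rw [← e.sum_comp]
  simp only [Fintype.sum_prod_type]
  rfl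

lemma sum_swap {R : Type*} [AddCommMonoid R] (n : ℕ) (τ : Equiv.Perm (Fin 3)) (F : (Fin n → Fin 3 → Bool) → R) :
    ∑ xs, F xs = ∑ xs : Fin n → Fin 3 → Bool, F (fun k i => xs k (τ i)) := by
  let e : (Fin n → Fin 3 → Bool) ≃ (Fin n → Fin 3 → Bool) :=
    { toFun := fun xs k i => xs k (τ i)
      invFun := fun xs k i => xs k (τ.symm i)
      left_inv := fun p => by ext k i; simp
      right_inv := fun x => by ext k i; simp }
  rw [← e.sum_comp]
  rfl

lemma prod_zpow_sum {ι : Type*} (t : Finset ι) (y : ℝ) (hy : y ≠ 0) (d : ι → ℤ) :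
    ∏ k ∈ t, y ^ d k = y ^ (∑ k ∈ t, d k) := by
  induction t using Finset.induction_on with
  | empty => simp
  | insert a t ha ih => rw [Finset.prod_insert ha, Finset.sum_insert ha, zpow_add₀ hy, ih]

lemma h2_aux (θ z : ℝ) (hz : z ≠ 0) (hzθ : z ^ 2 * (1 - θ) = θ) : θ ^ 2 * z⁻¹ = θ * (1 - θ) * z := by
  rw [← div_eq_mul_inv, div_eq_iff hz]
  linear_combination (-θ) * hzθ

lemma fourier_sum (θ z : ℝ) (hz : z ≠ 0) (hzθ : z ^ 2 * (1 - θ) = θ) (n : ℕ) (u : ℝ) :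
    ∑ xs : Fin n → Fin 3 → Bool, (∏ k, isingP θ chainA (xs k) * (z⁻¹) ^ dOne (xs k)) * Real.cos ((∑ k, dOne (xs k) : ℤ) * u)
     = ((1 - θ) + 2 * θ * (1 - θ) * z * Real.cos u) ^ n := by
  have hx : ∑ x : Fin 3 → Bool, ((isingP θ chainA x * (z⁻¹) ^ dOne x : ℝ) : ℂ) * Complex.exp (((dOne x : ℝ) * u : ℝ) * Complex.I) = (((1 - θ) + 2 * θ * (1 - θ) * z * Real.cos u : ℝ) : ℂ) := by
    have h2 : θ ^ 2 * z⁻¹ = θ * (1 - θ) * z := by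
      exact h2_aux θ z (by first | exact hz | exact hz.ne') hzθ
    have h2' : (θ:ℂ) ^ 2 * (z:ℂ)⁻¹ = θ * (1 - θ) * z := by exact_mod_cast congrArg (fun r : ℝ => (r:ℂ)) h2
    rw [sum_fin3]
    simp only [Fintype.sum_bool, ising_eq, dOne]
    simp [Complex.cos]
    rw [← sub_eq_zero]
    ring_nf
    ring_nf at h2'
    rw [h2']
    ring_nf
  have hp := Fintype.sum_pow (fun x : Fin 3 → Bool => ((isingP θ chainA x * (z⁻¹) ^ dOne x : ℝ) : ℂ) * Complex.exp (((dOne x : ℝ) * u : ℝ) * Complex.I)) n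
  rw [hx] at hp
  have hre := congrArg Complex.re hp
  rw [← Complex.ofReal_pow, Complex.ofReal_re, Complex.re_sum] at hre
  rw [hre]
  refine Finset.sum_congr rfl fun xs _ => ?_
  have hpr := Finset.prod_mul_distrib (s := (Finset.univ : Finset (Fin n))) (f := fun k => ((isingP θ chainA (xs k) * (z⁻¹) ^ dOne (xs k) : ℝ) : ℂ))
    (g := fun k => Complex.exp (((dOne (xs k) : ℝ) * u : ℝ) * Complex.I))
  rw [hpr, ← Complex.ofReal_prod, Complex.re_ofReal_mul, ← Complex.exp_sum, ← Finset.sum_mul, ← Complex.ofReal_sum,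
    Complex.exp_ofReal_mul_I_re, ← Finset.sum_mul]
  push_cast
  rfl

def cw (D : ℤ) : ℝ := if 0 < D then 2 else if D = 0 then 1 else 0

lemma cw_symm (z : ℝ) (D : ℤ) :
    z ^ D * cw D + z ^ (-D) * cw (-D) = 2 * z ^ D.natAbs := by
  rcases lt_trichotomy D 0 with h | h | h
  · have h1 : (D.natAbs : ℤ) = -D := by omega
    rw [← zpow_natCast, h1, cw, cw, if_neg (by omega), if_neg (by omega), if_pos (by omega)]; ring
  · subst h; simp [cw]; norm_num
  · have h1 : (D.natAbs : ℤ) = D := by omega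
    rw [← zpow_natCast, h1, cw, cw, if_pos h, if_neg (by omega), if_neg (by omega)]; ring

lemma tilt_sum (θ z : ℝ) (hz : z ≠ 0) (hzθ : z ^ 2 * (1 - θ) = θ) (n : ℕ) :
    ∑ xs : Fin n → Fin 3 → Bool, (∏ k, isingP θ chainA (xs k)) * cw (∑ k, dOne (xs k)) =
    ∑ xs : Fin n → Fin 3 → Bool, (∏ k, isingP θ chainA (xs k) * (z⁻¹) ^ dOne (xs k)) * z ^ (∑ k, dOne (xs k)).natAbs := by
  set Q : (Fin 3 → Bool) → ℝ := fun x => isingP θ chainA x * (z⁻¹) ^ dOne x with hQ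
  have hPQ : ∀ xs : Fin n → Fin 3 → Bool, ∏ k, isingP θ chainA (xs k) = (∏ k, Q (xs k)) * z ^ (∑ k, dOne (xs k)) := by
    intro xs
    rw [hQ, Finset.prod_mul_distrib, prod_zpow_sum _ _ (inv_ne_zero hz), mul_assoc, inv_zpow, inv_mul_cancel₀ (zpow_ne_zero _ hz), mul_one]
  simp_rw [hPQ]
  have hd : ∀ x : Fin 3 → Bool, dOne (fun i => x (Equiv.swap 1 2 i)) = - dOne x := by
    intro x
    have e0 : Equiv.swap (1 : Fin 3) 2 0 = 0 := by decide
    simp [dOne, e0]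
  have hQs : ∀ x : Fin 3 → Bool, Q (fun i => x (Equiv.swap 1 2 i)) = Q x := by
    intro x
    have e0 : Equiv.swap (1 : Fin 3) 2 0 = 0 := by decide
    have h2 : θ ^ 2 * z⁻¹ = θ * (1 - θ) * z := by
      exact h2_aux θ z (by first | exact hz | exact hz.ne') hzθ
    rw [hQ]
    dsimp only
    rw [hd, ising_eq, ising_eq]
    simp only [e0, Equiv.swap_apply_left, Equiv.swap_apply_right, dOne]
    rcases Bool.eq_false_or_eq_true (x 0) with h0 | h0 <;> rcases Bool.eq_false_or_eq_true (x 1) with h1 | h1 <;>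
    rcases Bool.eq_false_or_eq_true (x 2) with h3 | h3 <;> simp [h0, h1, h3] <;> linarith
  have hs := sum_swap n (Equiv.swap 1 2) (fun xs => (∏ k, Q (xs k)) * z ^ (∑ k, dOne (xs k)) * cw (∑ k, dOne (xs k)))
  simp only [hd, hQs, Finset.sum_neg_distrib] at hs
  have h2 : 2 * ∑ xs : Fin n → Fin 3 → Bool, (∏ k, Q (xs k)) * z ^ (∑ k, dOne (xs k)) * cw (∑ k, dOne (xs k)) =
     2 * ∑ xs : Fin n → Fin 3 → Bool, (∏ k, Q (xs k)) * z ^ (∑ k, dOne (xs k)).natAbs := by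
    rw [two_mul]
    nth_rewrite 2 [hs]
    rw [← Finset.sum_add_distrib, Finset.mul_sum]
    refine Finset.sum_congr rfl fun xs _ => ?_
    have := cw_symm z (∑ k, dOne (xs k))
    rw [mul_assoc, mul_assoc, ← mul_add, this]; ring
  linarith

lemma main_sum (θ z : ℝ) (hz : 0 < z) (hz1 : z < 1) (hzθ : z ^ 2 * (1 - θ) = θ) (n : ℕ) :
    ∑ xs : Fin n → Fin 3 → Bool, (∏ k, isingP θ chainA (xs k)) * cw (∑ k, dOne (xs k)) =
    Real.pi⁻¹ * ∫ u in (0:ℝ)..Real.pi, ((1 - θ) + 2 * θ * (1 - θ) * z * Real.cos u) ^ n * pk z u := by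
  rw [tilt_sum θ z hz.ne' hzθ]
  have hpk := pk_cont z hz hz1
  have : ∀ u, ((1 - θ) + 2 * θ * (1 - θ) * z * Real.cos u) ^ n * pk z u =
    ∑ xs : Fin n → Fin 3 → Bool, (∏ k, isingP θ chainA (xs k) * (z⁻¹) ^ dOne (xs k)) * (pk z u * Real.cos ((∑ k, dOne (xs k) : ℤ) * u)) := by
    intro u
    rw [← fourier_sum θ z hz.ne' hzθ, Finset.sum_mul]
    exact Finset.sum_congr rfl fun xs _ => by ring
  simp_rw [this]
  rw [intervalIntegral.integral_finsetSum]
  · rw [Finset.mul_sum]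
    refine Finset.sum_congr rfl fun xs _ => ?_
    rw [intervalIntegral.integral_const_mul, poisson_int z hz hz1]
    have := Real.pi_pos
    field_simp
  · intro xs _
    apply Continuous.intervalIntegrable
    fun_prop

lemma count_sub (n : ℕ) (xs : Fin n → Fin 3 → Bool) (i j k l : Fin 3) :
    (((Finset.univ.filter (fun m : Fin n => xs m i = xs m j)).card : ℤ) - (Finset.univ.filter (fun m : Fin n => xs m k = xs m l)).card) =
    ∑ m, ((if xs m i = xs m j then 1 else 0) - (if xs m k = xs m l then 1 else 0) : ℤ) := by
  rw [Finset.sum_sub_distrib]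
  simp

lemma chernoff (θ z y : ℝ) (hθ0 : 0 < θ) (hθ1 : θ < 1) (hz : 0 < z) (hz1 : z < 1) (hy : 1 ≤ y) (hzθ : z ^ 2 * (1 - θ) = θ) (n : ℕ) :
    ∑ xs : Fin n → Fin 3 → Bool, (∏ k, isingP θ chainA (xs k)) *
      (if 0 ≤ ∑ k, dOne (xs k) ∧ 0 ≤ ∑ k, dTwo (xs k) then 1 else 0) ≤
    ((1 - θ) ^ 2 + θ * (1 - θ) * (z + y⁻¹ + z * y)) ^ n := by
  have hP : ∀ x, 0 ≤ isingP θ chainA x := by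
    intro x
    rw [ising_eq]
    have : 0 < 1 - θ := by linarith
    positivity
  have hx : ∑ x : Fin 3 → Bool, isingP θ chainA x * ((z⁻¹) ^ dOne x * y ^ dTwo x) = (1 - θ) ^ 2 + θ * (1 - θ) * (z + y⁻¹ + z * y) := by
    have h2 : θ ^ 2 * z⁻¹ = θ * (1 - θ) * z := by
      exact h2_aux θ z (by first | exact hz | exact hz.ne') hzθ
    rw [sum_fin3]
    simp only [Fintype.sum_bool, ising_eq, dOne, dTwo]
    simp
    linear_combination y * h2
  rw [← hx, Fintype.sum_pow]
  refine Finset.sum_le_sum fun xs _ => ?_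
  rw [Finset.prod_mul_distrib]
  have hnn : 0 ≤ ∏ k, isingP θ chainA (xs k) := Finset.prod_nonneg fun k _ => hP _
  refine mul_le_mul_of_nonneg_left ?_ hnn
  rw [Finset.prod_mul_distrib, prod_zpow_sum _ _ (by positivity), prod_zpow_sum _ _ (by positivity)]
  split_ifs with h
  · have a1 : 1 ≤ (z⁻¹) ^ (∑ k, dOne (xs k)) := one_le_zpow₀ (by rw [one_le_inv₀ hz]; exact hz1.le) h.1
    have a2 : 1 ≤ y ^ (∑ k, dTwo (xs k)) := one_le_zpow₀ hy h.2
    nlinarith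
  · positivity

lemma err_approx (θ : ℝ) (hθ0 : 0 < θ) (hθ1 : θ < 1) (n : ℕ) (hn : 0 < n) :
    |ErrProb θ n - ∑ xs : Fin n → Fin 3 → Bool, (∏ k, isingP θ chainA (xs k)) * cw (∑ k, dOne (xs k))| ≤
    ∑ xs : Fin n → Fin 3 → Bool, (∏ k, isingP θ chainA (xs k)) *
      (if 0 ≤ ∑ k, dOne (xs k) ∧ 0 ≤ ∑ k, dTwo (xs k) then 1 else 0) := by
  have hP : ∀ x, 0 ≤ isingP θ chainA x := by
    intro x
    rw [ising_eq]
    have : 0 < 1 - θ := by linarith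
    positivity
  have hsym : ∑ xs : Fin n → Fin 3 → Bool, (∏ k, isingP θ chainA (xs k)) * cw (∑ k, dOne (xs k)) =
      ∑ xs : Fin n → Fin 3 → Bool, (∏ k, isingP θ chainA (xs k)) * cw (∑ k, dTwo (xs k)) := by
    rw [sum_swap n (Equiv.swap 0 2)]
    have e0 : Equiv.swap (0 : Fin 3) 2 1 = 1 := by decide
    have hd : ∀ x : Fin 3 → Bool, dOne (fun i => x (Equiv.swap 0 2 i)) = dTwo x := by
      intro x
      simp [dOne, dTwo, e0, eq_comm]
    have hi : ∀ x : Fin 3 → Bool, isingP θ chainA (fun i => x (Equiv.swap 0 2 i)) = isingP θ chainA x := by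
      intro x
      rw [ising_eq, ising_eq]
      simp only [e0, Equiv.swap_apply_left, Equiv.swap_apply_right, eq_comm, mul_comm]
    simp only [hd, hi]
  have hsum : ∑ xs : Fin n → Fin 3 → Bool, (∏ k, isingP θ chainA (xs k)) * cw (∑ k, dOne (xs k)) =
     ∑ xs : Fin n → Fin 3 → Bool, (∏ k, isingP θ chainA (xs k)) * (cw (∑ k, dOne (xs k)) / 2 + cw (∑ k, dTwo (xs k)) / 2) := by
    simp only [mul_add, Finset.sum_add_distrib, mul_div_assoc', ← Finset.sum_div]
    rw [← hsym]; ring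
  have hn' : (0:ℝ) < n := by exact_mod_cast hn
  rw [hsum, ErrProb]
  simp only [iidProb, Finset.mul_sum]
  rw [← Finset.sum_add_distrib, ← Finset.sum_add_distrib, ← Finset.sum_add_distrib, ← Finset.sum_sub_distrib]
  refine (Finset.abs_sum_le_sum_abs _ _).trans ?_
  refine Finset.sum_le_sum fun xs _ => ?_
  have hnn : 0 ≤ ∏ k, isingP θ chainA (xs k) := Finset.prod_nonneg fun k _ => hP _
  set p := ∏ k, isingP θ chainA (xs k)
  have c1 := count_sub n xs 0 2 0 1
  have c2 := count_sub n xs 0 2 1 2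
  change _ = ∑ k, dOne (xs k) at c1
  change _ = ∑ k, dTwo (xs k) at c2
  rw [← c1, ← c2]
  simp only [Set.mem_ofPred_eq, Ahat, div_lt_div_iff_of_pos_right hn', div_left_inj' hn'.ne', Nat.cast_lt, Nat.cast_inj, cw]
  generalize (Finset.univ.filter (fun m : Fin n => xs m 0 = xs m 2)).card = a
  generalize (Finset.univ.filter (fun m : Fin n => xs m 0 = xs m 1)).card = b
  generalize (Finset.univ.filter (fun m : Fin n => xs m 1 = xs m 2)).card = c
  rcases lt_trichotomy a b with h | h | h <;> rcases lt_trichotomy a c with h' | h' | h'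
  all_goals
    simp (disch := omega) only [if_pos, if_neg]
    rw [abs_le]
    constructor <;> linarith

lemma param (θ : ℝ) (hθ0 : 0 < θ) (hθ1 : θ < 1 / 2) :
    0 < zTheta θ ∧ zTheta θ < 1 ∧ (zTheta θ) ^ 2 * (1 - θ) = θ ∧
    Real.exp (-Kexp θ) = (1 - θ) + 2 * θ * (1 - θ) * zTheta θ ∧
    sigmaSq θ * ((1 - θ) + 2 * θ * (1 - θ) * zTheta θ) = 2 * θ * (1 - θ) * zTheta θ := by
  have h1 : 0 < 1 - θ := by linarith
  have hz : 0 < zTheta θ := Real.sqrt_pos.mpr (by positivity)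
  have hzsq : (zTheta θ) ^ 2 = θ / (1 - θ) := Real.sq_sqrt (by positivity)
  have hzθ : (zTheta θ) ^ 2 * (1 - θ) = θ := by rw [hzsq]; field_simp
  have hsq : Real.sqrt (4 * θ * (1 - θ)) = 2 * (1 - θ) * zTheta θ := by
    rw [Real.sqrt_eq_iff_mul_self_eq (by positivity) (by positivity)]
    linear_combination (-(4 * (1 - θ))) * hzθ
  have hM : 1 - θ * (1 - Real.sqrt (4 * θ * (1 - θ))) = (1 - θ) + 2 * θ * (1 - θ) * zTheta θ := by
    rw [hsq]; ring
  have hM0 : 0 < (1 - θ) + 2 * θ * (1 - θ) * zTheta θ := by positivity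
  have hK : Real.exp (-Kexp θ) = (1 - θ) + 2 * θ * (1 - θ) * zTheta θ := by
    rw [Kexp, neg_neg, hM, Real.exp_log hM0]
  refine ⟨hz, ?_, hzθ, hK, ?_⟩
  · by_contra hcon
    push Not at hcon
    nlinarith
  · rw [sigmaSq, ← hK, mul_assoc, ← Real.exp_add, add_neg_cancel, Real.exp_zero, hsq]; ring

theorem stmt11 (θ : ℝ) (hθ0 : 0 < θ) (hθ1 : θ < 1 / 2) :
    Filter.Tendsto (fun n : ℕ =>
      (n : ℝ) * (ErrProb θ n / (2 * fn θ n - ftilde θ n) - 1))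
      Filter.atTop (nhds 0) := by
  obtain ⟨hz0, hz1, hzθ, hK, hσ⟩ := param θ hθ0 hθ1
  have h1θ : 0 < 1 - θ := by linarith
  unfold fn ftilde
  generalize zTheta θ = z at *
  generalize sigmaSq θ = s at *
  set M := (1 - θ) + 2 * θ * (1 - θ) * z with hM
  have hM0 : 0 < M := by positivity
  have hs0 : 0 < s := by
    have : 0 < s * M := by rw [hσ]; positivity
    exact pos_of_mul_pos_left this hM0.le
  have hs1 : s < 1 := by
    by_contra hcon
    push Not at hcon
    nlinarith
  have hz : 0 < 1 - z := by linarith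
  obtain ⟨C, hC1, hC2, hC3⟩ := pk_bounds z hz0 hz1
  have hlap := laplace s hs0 hs1 (pk z) (pk_cont z hz0 hz1) _ _ C hC1 hC2 hC3
  set h0 := (1 + z) / (1 - z) with hh0
  have hh : 0 < h0 := by positivity
  set g0 := Real.sqrt (Real.pi / (s / 2)) / 2 with hg0
  have hg : 0 < g0 := by positivity
  set L : ℕ → ℝ := fun n => ∫ u in (0:ℝ)..Real.pi, (1 - s * (1 - Real.cos u)) ^ n * pk z u with hL
  set q := Real.sqrt (2 * Real.pi * s) with hq
  have hq0 : 0 < q := by positivity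
  have hqg : q * g0 = Real.pi := by
    rw [hq, hg0, mul_div_assoc', ← Real.sqrt_mul (by positivity)]
    have : 2 * Real.pi * s * (Real.pi / (s / 2)) = (2 * Real.pi) ^ 2 := by field_simp; try ring
    rw [this, Real.sqrt_sq (by positivity)]; ring
  set γ := (1 - 3 * s) / (8 * s) with hγ
  set δ := z / ((1 - z) ^ 2 * s) with hδ
  -- chernoff remainder
  set y := 2 / (1 + z) with hy
  have hy1 : 1 ≤ y := by rw [hy, le_div_iff₀ (by positivity)]; linarith
  set M' := (1 - θ) ^ 2 + θ * (1 - θ) * (z + y⁻¹ + z * y) with hM'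
  have hM'0 : 0 < M' := by positivity
  have hMM : M' < M := by
    have e : M - M' = θ * (1 - θ) * ((1 - z) ^ 2 / (2 * (1 + z))) := by
      rw [hM, hM', hy]; field_simp; ring
    have : 0 < θ * (1 - θ) * ((1 - z) ^ 2 / (2 * (1 + z))) := by positivity
    linarith
  set r := M' / M with hr
  have hr0 : 0 < r := by positivity
  have hr1 : r < 1 := by rw [hr, div_lt_one hM0]; exact hMM
  set R : ℕ → ℝ := fun n => ErrProb θ n / M ^ n - Real.pi⁻¹ * L n with hR
  have hErr : ∀ n, 0 < n → |R n| ≤ r ^ n := by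
    intro n hn
    have e1 := err_approx θ hθ0 (by linarith) n hn
    have e2 := chernoff θ z y hθ0 (by linarith) hz0 hz1 hy1 hzθ n
    rw [main_sum θ z hz0 hz1 hzθ n] at e1
    have e3 : ∫ u in (0:ℝ)..Real.pi, ((1 - θ) + 2 * θ * (1 - θ) * z * Real.cos u) ^ n * pk z u = M ^ n * L n := by
      rw [hL, ← intervalIntegral.integral_const_mul]
      congr 1
      ext u
      rw [← mul_assoc, ← mul_pow]
      congr 2
      linear_combination hM + (1 - Real.cos u) * hσ
    rw [e3] at e1
    have e4 : R n = (ErrProb θ n - Real.pi⁻¹ * (M ^ n * L n)) / M ^ n := by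
      rw [hR]; field_simp
    rw [e4, abs_div, abs_of_pos (by positivity : 0 < M ^ n), hr, div_pow]
    gcongr
    exact e1.trans e2
  have hR0 : Tendsto (fun n : ℕ => (n:ℝ) * (Real.sqrt n * R n)) atTop (𝓝 0) := by
    have := tendsto_pow_const_mul_const_pow_of_abs_lt_one 2 (r := r) (by rw [abs_of_pos hr0]; exact hr1)
    refine squeeze_zero_norm' ?_ this
    filter_upwards [eventually_gt_atTop 0] with n hn
    have hn' : (1:ℝ) ≤ n := by exact_mod_cast hn
    rw [Real.norm_eq_abs, abs_mul, abs_mul, abs_of_nonneg (Real.sqrt_nonneg _), abs_of_nonneg (by positivity : (0:ℝ) ≤ n), sq, mul_assoc]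
    have : Real.sqrt n ≤ n := by
      rw [Real.sqrt_le_left (by positivity)]; nlinarith
    gcongr
    exact hErr n hn
  -- main combination
  set B : ℕ → ℝ := fun n => (1 + γ / n) * (1 - δ / n) with hB
  have hinv : Tendsto (fun n : ℕ => ((n:ℝ))⁻¹) atTop (𝓝 0) := tendsto_inv_atTop_nhds_zero_nat
  have hBlim : Tendsto B atTop (𝓝 1) := by
    have := ((hinv.const_mul γ).const_add 1).mul ((hinv.const_mul δ).const_sub 1)
    simpa [hB, div_eq_mul_inv] using this
  have hBlim2 : Tendsto (fun n : ℕ => (n:ℝ) * (B n - 1)) atTop (𝓝 (γ - δ)) := by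
    have := (hinv.const_mul (γ * δ)).const_sub (γ - δ)
    rw [mul_zero, sub_zero] at this
    refine this.congr' ?_
    filter_upwards [eventually_gt_atTop 0] with n hn
    have hn' : (0:ℝ) < n := by exact_mod_cast hn
    rw [hB]
    field_simp
    ring
  have hnum : Tendsto (fun n : ℕ => (n:ℝ) * (q / h0 * (Real.sqrt n * (Real.pi⁻¹ * L n + R n)) - 1)) atTop (𝓝 (γ - δ)) := by
    have t := (hlap.const_mul (q / h0 * Real.pi⁻¹)).add (hR0.const_mul (q / h0))
    have e : γ - δ = q / h0 * Real.pi⁻¹ * (g0 * (h0 * (s / 24 - s ^ 2 / 8) * 3 / s ^ 2 + -(h0 * (z / (1 - z) ^ 2)) / s)) + q / h0 * 0 := by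
      have hgq : g0 = Real.pi / q := by rw [← hqg]; field_simp
      rw [hgq, hγ, hδ]
      have := Real.pi_pos
      clear_value q h0 
      field_simp
      ring
    rw [e]
    refine t.congr fun n => ?_
    have hgq : g0 = Real.pi / q := by rw [← hqg]; field_simp
    rw [hgq]
    have := Real.pi_pos
    field_simp
    ring
  have hfin : Tendsto (fun n : ℕ => ((n:ℝ) * (q / h0 * (Real.sqrt n * (Real.pi⁻¹ * L n + R n)) - 1) - (n:ℝ) * (B n - 1)) / B n) atTop (𝓝 0) := by
    have := (hnum.sub hBlim2).div hBlim one_ne_zero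
    rw [sub_self, zero_div] at this
    exact this
  refine hfin.congr' ?_
  filter_upwards [eventually_gt_atTop 0, hBlim.eventually_const_lt one_pos] with n hn hBn
  have hn' : (0:ℝ) < n := by exact_mod_cast hn
  have hsq : 0 < Real.sqrt n := Real.sqrt_pos.mpr hn'
  have hexp : Real.exp (-(n:ℝ) * Kexp θ) = M ^ n := by
    rw [← hK, ← Real.exp_nat_mul]; congr 1; ring
  have hErrn : ErrProb θ n = M ^ n * (Real.pi⁻¹ * L n + R n) := by
    rw [hR]; field_simp; ring
  have hsqrt : Real.sqrt (2 * Real.pi * s * n) = q * Real.sqrt n := by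
    rw [hq, Real.sqrt_mul (by positivity)]
  have hden : 2 * (Real.exp (-(n:ℝ) * Kexp θ) / Real.sqrt (2 * Real.pi * s * n) * (1 + (1 - 3 * s) / (8 * s * n)) / (1 - z) * (1 - z * (1 + z) / (2 * (1 - z) ^ 2 * s * n))) - Real.exp (-(n:ℝ) * Kexp θ) / Real.sqrt (2 * Real.pi * s * n) * (1 + (1 - 3 * s) / (8 * s * n)) = M ^ n / (q * Real.sqrt n) * h0 * B n := by
    rw [hexp, hsqrt, hB, hγ, hδ, hh0]
    clear_value q
    field_simp
    ring
  rw [hden, hErrn]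
  clear_value B h0 q R L M
  field_simp
  ring
end

section
/- Let θ ∈ (0, 1/2), let P = P_{T,θ} on {0,1}⁴ for the path tree T with edge set {{1,2},{2,3},{3,4}}, and let x_1,…,x_n be i.i.d. samples from P. Then lim_{n→∞} −(1/n)·log ℙ(Â_{1,4} ≥ Â_{1,2}) = −log(1 − 2θ(1−θ)·(1 − √(4θ(1−θ)))), and this value is strictly greater than K(θ) := −log(1 − θ·(1 − √(4θ(1−θ)))); hence the event {Â_{1,4} ≥ Â_{1,2}} is not a dominant error event. -/
open scoped Classical BigOperators
open Filter

open Polynomial in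
lemma aux_coeff (r c : ℝ) (hr : 0 < r) (hc : 0 < c) (m : ℕ) :
    (c + 2 * r) ^ (2 * m) / (2 * m + 1) ≤ ((C r + C c * X + C r * X ^ 2 : ℝ[X]) ^ (2 * m)).coeff (2 * m) := by
  set p : ℝ[X] := C r + C c * X + C r * X ^ 2 with hp
  have hdeg : p.natDegree ≤ 2 := by rw [hp]; compute_degree
  have hrefl : p.reflect 2 = p := by
    rw [hp, reflect_add, reflect_add]
    have e1 : reflect 2 (C r : ℝ[X]) = C r * X ^ 2 := by
      have := reflect_C_mul_X_pow 2 0 (c := r)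
      rwa [pow_zero, mul_one, revAt_le (by norm_num)] at this
    have e2 : reflect 2 (C c * X : ℝ[X]) = C c * X := by
      have := reflect_C_mul_X_pow 2 1 (c := c)
      rwa [pow_one, revAt_le (by norm_num), pow_one] at this
    have e3 : reflect 2 (C r * X ^ 2 : ℝ[X]) = C r := by
      have := reflect_C_mul_X_pow 2 2 (c := r)
      rwa [revAt_le (by norm_num), Nat.sub_self, pow_zero, mul_one] at this
    rw [e1, e2, e3]
    ring
  have hdm : ∀ m : ℕ, (p ^ m).natDegree ≤ 2 * m := by
    intro m
    refine natDegree_pow_le.trans ?_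
    nlinarith
  have hrm : ∀ m : ℕ, (p ^ m).reflect (2 * m) = p ^ m := by
    intro m
    induction m with
    | zero => simp
    | succ k ih =>
      rw [pow_succ, show 2 * (k + 1) = 2 * k + 2 by ring, reflect_mul _ _ (hdm k) hdeg, ih, hrefl]
  have hsym : ∀ i ≤ 2 * m, (p ^ m).coeff (2 * m - i) = (p ^ m).coeff i := by
    intro i hi
    conv_rhs => rw [← hrm m, coeff_reflect, revAt_le hi]
  have h1 : (p ^ (2 * m)).coeff (2 * m) = ∑ i ∈ Finset.range (2 * m + 1), (p ^ m).coeff i ^ 2 := by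
    rw [two_mul, pow_add, ← two_mul, coeff_mul, Finset.Nat.sum_antidiagonal_eq_sum_range_succ_mk]
    apply Finset.sum_congr rfl
    intro i hi
    rw [Finset.mem_range] at hi
    simp only
    rw [hsym i (by omega), sq]
  have h2 : (c + 2 * r) ^ m = ∑ i ∈ Finset.range (2 * m + 1), (p ^ m).coeff i := by
    have : (p ^ m).eval 1 = (c + 2 * r) ^ m := by
      rw [eval_pow, hp]; simp; ring
    rw [← this, eval_eq_sum_range' (Nat.lt_succ_of_le (hdm m))]
    simp
  rw [h1, mul_comm 2 m, pow_mul, h2, mul_comm m 2]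
  have := sq_sum_le_card_mul_sum_sq (s := Finset.range (2 * m + 1)) (f := fun i => (p ^ m).coeff i)
  rw [Finset.card_range] at this
  push_cast at this
  rw [div_le_iff₀ (by positivity)]
  linarith

open Polynomial in
lemma aux_coeff' (r c : ℝ) (hr : 0 < r) (hc : 0 < c) (n : ℕ) :
    (c / (c + 2 * r)) * (c + 2 * r) ^ n / (n + 1) ≤ ((C r + C c * X + C r * X ^ 2 : ℝ[X]) ^ n).coeff n := by
  have hM : 0 < c + 2 * r := by positivity
  obtain ⟨m, rfl | rfl⟩ := Nat.even_or_odd' n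
  · refine le_trans ?_ (aux_coeff r c hr hc m)
    push_cast
    gcongr
    apply mul_le_of_le_one_left (by positivity)
    rw [div_le_one hM]; linarith
  · have h := aux_coeff r c hr hc m
    set p : ℝ[X] := C r + C c * X + C r * X ^ 2 with hp
    have hpc : ∀ k, 0 ≤ p.coeff k := by
      intro k
      simp only [hp, coeff_add, coeff_C_mul, coeff_C, coeff_X, coeff_X_pow]
      split_ifs <;> simp <;> linarith
    have hnn : ∀ m k, 0 ≤ (p ^ m).coeff k := by
      intro m
      induction m with
      | zero => intro k; simp [coeff_one]; split_ifs <;> norm_num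
      | succ j ih =>
        intro k
        rw [pow_succ, coeff_mul]
        exact Finset.sum_nonneg fun i _ => mul_nonneg (ih _) (hpc _)
    have h3 : (p ^ (2 * m)).coeff (2 * m) * c ≤ (p ^ (2 * m + 1)).coeff (2 * m + 1) := by
      rw [pow_succ, coeff_mul]
      have hc1 : p.coeff 1 = c := by simp [hp, coeff_X_pow, coeff_C]
      have := Finset.single_le_sum (f := fun x : ℕ × ℕ => (p ^ (2 * m)).coeff x.1 * p.coeff x.2)
        (s := Finset.HasAntidiagonal.antidiagonal (2 * m + 1)) (fun i _ => mul_nonneg (hnn _ _) (hpc _))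
        (a := (2 * m, 1)) (by simp)
      simpa [hc1] using this
    refine le_trans ?_ h3
    refine le_trans ?_ (mul_le_mul_of_nonneg_right h hc.le)
    rw [pow_succ, show c / (c + 2 * r) * ((c + 2 * r) ^ (2 * m) * (c + 2 * r)) = (c + 2 * r) ^ (2 * m) * c by
      field_simp, div_mul_eq_mul_div]
    push_cast
    gcongr
    linarith

def dd (x : Fin 4 → Bool) : ℕ := (if x 0 = x 3 then 1 else 0) + (if x 0 = x 1 then 0 else 1)

lemma isingP_path4 (θ : ℝ) (x : Fin 4 → Bool) : isingP θ path4 x =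
    1 / 2 * ((if x 0 = x 1 then 1 - θ else θ) * ((if x 1 = x 2 then 1 - θ else θ) *
      (if x 2 = x 3 then 1 - θ else θ))) := by
  unfold isingP
  have h : path4.edgeFinset = {s(0,1), s(1,2), s(2,3)} := by
    ext e
    rw [SimpleGraph.mem_edgeFinset, path4, SimpleGraph.edgeSet_fromEdgeSet]
    simp only [Set.mem_diff, Set.mem_insert_iff, Set.mem_singleton_iff, Finset.mem_insert,
      Finset.mem_singleton, Set.mem_setOf_eq]
    constructor
    · exact fun h => h.1
    · intro h
      refine ⟨h, ?_⟩
      rcases h with rfl | rfl | rfl <;> simp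
  rw [h, Finset.prod_insert (by decide), Finset.prod_insert (by decide), Finset.prod_singleton]
  simp [pairWeight]

def boolE : (Bool × Bool × Bool × Bool) ≃ (Fin 4 → Bool) where
  toFun b := ![b.1, b.2.1, b.2.2.1, b.2.2.2]
  invFun x := (x 0, x 1, x 2, x 3)
  left_inv b := by simp
  right_inv x := by ext i; fin_cases i <;> rfl

open Polynomial in
lemma gen_poly (θ l r : ℝ) (hl : 0 < l) (h1 : 2 * θ ^ 2 * (1 - θ) * l = r)
    (h2 : 2 * θ * (1 - θ) ^ 2 = r * l) :
    ∑ x : Fin 4 → Bool, C (isingP θ path4 x * l ^ dd x / l) * X ^ dd x =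
      (C r + C (1 - 2 * θ * (1 - θ)) * X + C r * X ^ 2 : ℝ[X]) := by
  have h2' : 2 * θ * (1 - θ) ^ 2 / l = r := by rw [h2]; field_simp
  rw [← boolE.sum_comp]
  simp only [isingP_path4, dd, boolE, Equiv.coe_fn_mk, Fintype.sum_prod_type, Fintype.sum_bool]
  have e0 : l / l = 1 := div_self hl.ne'
  have e2 : l ^ 2 / l = l := by field_simp
  generalize hcc : 1 - 2 * θ * (1 - θ) = c
  ext k
  simp only [coeff_add, coeff_C_mul, coeff_X_pow, coeff_X, coeff_C, mul_div_assoc]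
  have : k = 0 ∨ k = 1 ∨ k = 2 ∨ 3 ≤ k := by omega
  rcases this with rfl | rfl | rfl | h
  · simp; rw [← h2']; ring
  · simp [e0]; rw [← hcc]; ring
  · simp [e2]; rw [← h1]; ring
  · simp [show k ≠ 0 by omega, show k ≠ 1 by omega, show k ≠ 2 by omega, show 1 ≠ k by omega, show 2 ≠ k by omega, show 0 ≠ k by omega]

lemma event_iff {n : ℕ} (xs : Fin n → Fin 4 → Bool) :
    Ahat xs 0 1 ≤ Ahat xs 0 3 ↔ n ≤ ∑ k, dd (xs k) := by
  rcases Nat.eq_zero_or_pos n with rfl | hn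
  · simp [Ahat]
  have hn' : (0 : ℝ) < n := by exact_mod_cast hn
  unfold Ahat
  rw [div_le_div_iff_of_pos_right hn', Nat.cast_le]
  have : ∑ k, dd (xs k) + (Finset.univ.filter (fun k : Fin n => xs k 0 = xs k 1)).card =
      (Finset.univ.filter (fun k : Fin n => xs k 0 = xs k 3)).card + n := by
    rw [Finset.card_filter, Finset.card_filter, ← Finset.sum_add_distrib]
    have hone : n = ∑ _k : Fin n, 1 := by simp
    refine Eq.trans ?_ (congrArg (fun t => (∑ i, if xs i 0 = xs i 3 then 1 else 0) + t) hone.symm)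
    rw [← Finset.sum_add_distrib]
    apply Finset.sum_congr rfl
    intro k _
    unfold dd
    split_ifs <;> rfl
  omega

open Polynomial in
lemma bounds (θ l r : ℝ) (hθ0 : 0 < θ) (hθ1 : θ < 1 / 2) (hl : 1 ≤ l) (hr : 0 < r)
    (h1 : 2 * θ ^ 2 * (1 - θ) * l = r)
    (h2 : 2 * θ * (1 - θ) ^ 2 = r * l) (n : ℕ) :
    let c := 1 - 2 * θ * (1 - θ)
    let p := iidProb (isingP θ path4) n {xs | Ahat xs 0 1 ≤ Ahat xs 0 3}
    (c / (c + 2 * r)) * (c + 2 * r) ^ n / (n + 1) ≤ p ∧ p ≤ (c + 2 * r) ^ n := by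
  intro c p
  have hl0 : 0 < l := by linarith
  have hc : 0 < c := by show 0 < 1 - 2 * θ * (1 - θ); nlinarith
  have hP : ∀ x, 0 ≤ isingP θ path4 x := by
    intro x
    rw [isingP_path4]
    have : 0 < 1 - θ := by linarith
    split_ifs <;> positivity
  have hg := gen_poly θ l r hl0 h1 h2
  set Q : (Fin 4 → Bool) → ℝ := fun x => isingP θ path4 x * l ^ dd x / l with hQ
  have hQ0 : ∀ x, 0 ≤ Q x := fun x => by have := hP x; simp only [hQ]; positivity
  have hQP : ∀ xs : Fin n → Fin 4 → Bool,
      (∏ k, Q (xs k)) = (∏ k, isingP θ path4 (xs k)) * (l ^ (∑ k, dd (xs k)) / l ^ n) := by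
    intro xs
    simp only [hQ, Finset.prod_div_distrib, Finset.prod_mul_distrib, Finset.prod_pow_eq_pow_sum]
    simp [mul_div_assoc]
  have hpow : (C r + C c * X + C r * X ^ 2 : ℝ[X]) ^ n =
      ∑ xs : Fin n → Fin 4 → Bool, C (∏ k, Q (xs k)) * X ^ (∑ k, dd (xs k)) := by
    rw [← hg]
    have := Finset.prod_univ_sum (κ := fun _ : Fin n => Fin 4 → Bool) (fun _ => Finset.univ)
      (fun (_ : Fin n) x => (C (Q x) * X ^ dd x : ℝ[X]))
    simp only [Finset.prod_const, Finset.card_univ, Fintype.card_fin, Fintype.piFinset_univ] at this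
    rw [this]
    apply Finset.sum_congr rfl
    intro xs _
    rw [Finset.prod_mul_distrib, Finset.prod_pow_eq_pow_sum, map_prod]
  constructor
  · refine (aux_coeff' r c hr hc n).trans ?_
    rw [hpow, finsetSum_coeff]
    apply Finset.sum_le_sum
    intro xs _
    have hpos : 0 ≤ ∏ k, isingP θ path4 (xs k) := Finset.prod_nonneg fun _ _ => hP _
    rw [coeff_C_mul_X_pow]
    simp only [Set.mem_setOf_eq, event_iff]
    split_ifs with ha hb hb
    · rw [hQP, ← ha, div_self (by positivity), mul_one]
    · omega
    · exact hpos
    · exact le_rfl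
  · have he : (c + 2 * r) ^ n = ∑ xs : Fin n → Fin 4 → Bool, ∏ k, Q (xs k) := by
      have := congrArg (Polynomial.eval 1) hpow
      simp only [eval_finset_sum, eval_pow, eval_add, eval_mul, eval_C, eval_X, one_pow, mul_one] at this
      rw [← this]; ring
    rw [he]
    apply Finset.sum_le_sum
    intro xs _
    have hpos : 0 ≤ ∏ k, isingP θ path4 (xs k) := Finset.prod_nonneg fun _ _ => hP _
    simp only [Set.mem_setOf_eq, event_iff]
    split_ifs with ha
    · rw [hQP]
      apply le_mul_of_one_le_right hpos
      rw [one_le_div (by positivity)]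
      exact pow_le_pow_right₀ hl ha
    · exact Finset.prod_nonneg fun _ _ => hQ0 _

lemma limit_aux (p : ℕ → ℝ) (M κ : ℝ) (hM : 0 < M) (hκ : 0 < κ)
    (h : ∀ n : ℕ, κ * M ^ n / (n + 1) ≤ p n ∧ p n ≤ M ^ n) :
    Tendsto (fun n : ℕ => -(1 / (n : ℝ)) * Real.log (p n)) atTop (nhds (-Real.log M)) := by
  have t1 : Tendsto (fun n : ℕ => Real.log ((n : ℝ) + 1) / (n : ℝ)) atTop (nhds 0) := by
    have a : Tendsto (fun x : ℝ => Real.log x / (x - 1)) atTop (nhds 0) := by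
      have := Real.tendsto_pow_log_div_mul_add_atTop 1 (-1) 1 one_ne_zero
      simpa [sub_eq_add_neg] using this
    have b : Tendsto (fun n : ℕ => (n : ℝ) + 1) atTop atTop :=
      tendsto_atTop_add_const_right _ _ tendsto_natCast_atTop_atTop
    have := a.comp b
    refine this.congr fun n => ?_
    simp
  have t2 : Tendsto (fun n : ℕ => Real.log κ / (n : ℝ)) atTop (nhds 0) :=
    tendsto_const_div_atTop_nhds_zero_nat _
  have t3 : Tendsto (fun n : ℕ => -Real.log M + Real.log ((n : ℝ) + 1) / (n : ℝ) - Real.log κ / (n : ℝ))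
      atTop (nhds (-Real.log M)) := by
    simpa using (t1.const_add (-Real.log M)).sub t2
  refine tendsto_of_tendsto_of_tendsto_of_le_of_le' tendsto_const_nhds t3 ?_ ?_
  · filter_upwards [eventually_gt_atTop 0] with n hn
    have hn' : (0 : ℝ) < n := by exact_mod_cast hn
    obtain ⟨ha, hb⟩ := h n
    have hp : 0 < p n := lt_of_lt_of_le (by positivity) ha
    have := Real.log_le_log hp hb
    rw [Real.log_pow] at this
    have e : -(1 / (n : ℝ)) * Real.log (p n) = -(Real.log (p n) / n) := by ring
    rw [e, neg_le_neg_iff, div_le_iff₀ hn']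
    linarith
  · filter_upwards [eventually_gt_atTop 0] with n hn
    have hn' : (0 : ℝ) < n := by exact_mod_cast hn
    obtain ⟨ha, hb⟩ := h n
    have := Real.log_le_log (by positivity) ha
    rw [Real.log_div (by positivity) (by positivity), Real.log_mul (by positivity) (by positivity),
      Real.log_pow] at this
    have e : -Real.log M + Real.log ((n : ℝ) + 1) / (n : ℝ) - Real.log κ / (n : ℝ) =
      -((Real.log κ + n * Real.log M - Real.log (n + 1)) / n) := by field_simp; ring
    have e' : -(1 / (n : ℝ)) * Real.log (p n) = -(Real.log (p n) / n) := by ring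
    rw [e, e', neg_le_neg_iff]
    gcongr

/-- for the 4-node path, the exponent of the non-neighbor crossover event
`{Â_{1,4} ≥ Â_{1,2}}` equals `-log(1 - 2θ(1-θ)(1 - √(4θ(1-θ))))`, which is strictly
larger than `K(θ)`; hence this event is not dominant. -/
theorem stmt13 (θ : ℝ) (hθ0 : 0 < θ) (hθ1 : θ < 1 / 2) :
    Filter.Tendsto (fun n : ℕ =>
      -(1 / (n : ℝ)) * Real.log (iidProb (isingP θ path4) n
        {xs | Ahat xs 0 1 ≤ Ahat xs 0 3}))
      Filter.atTop
      (nhds (-Real.log (1 - 2 * θ * (1 - θ) * (1 - Real.sqrt (4 * θ * (1 - θ)))))) ∧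
    (-Real.log (1 - θ * (1 - Real.sqrt (4 * θ * (1 - θ)))))
      < -Real.log (1 - 2 * θ * (1 - θ) * (1 - Real.sqrt (4 * θ * (1 - θ)))) := by
  have hpos : 0 < 4 * θ * (1 - θ) := by nlinarith
  set s := Real.sqrt (4 * θ * (1 - θ)) with hs
  have hs0 : 0 < s := Real.sqrt_pos.mpr hpos
  have hs2 : s ^ 2 = 4 * θ * (1 - θ) := Real.sq_sqrt hpos.le
  have hs1 : s < 1 := by nlinarith [sq_nonneg (1 - 2 * θ), mul_pos (sub_pos.mpr hθ1) (sub_pos.mpr hθ1)]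
  have hq : 0 < θ * (1 - θ) := by nlinarith
  have hM : 0 < 1 - 2 * θ * (1 - θ) * (1 - s) := by nlinarith [mul_pos hq hs0]
  constructor
  · have hl : 1 ≤ s / (2 * θ) := by
      rw [le_div_iff₀ (by positivity)]
      nlinarith
    have hb := bounds θ (s / (2 * θ)) (θ * (1 - θ) * s) hθ0 hθ1 hl (by positivity)
      (by field_simp) (by field_simp; rw [hs2]; ring)
    have hc : 0 < 1 - 2 * θ * (1 - θ) := by nlinarith
    have e : 1 - 2 * θ * (1 - θ) + 2 * (θ * (1 - θ) * s) = 1 - 2 * θ * (1 - θ) * (1 - s) := by ring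
    simp only [e] at hb
    exact limit_aux _ _ _ hM (div_pos hc hM) hb
  · apply neg_lt_neg
    apply Real.log_lt_log hM
    nlinarith [mul_pos (mul_pos hθ0 (by linarith : 0 < 1 - 2 * θ)) (sub_pos.mpr hs1)]
end
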